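/- arXiv:1808.04948 — 2 statements merged into one kernel-verified Lean document; each statement's English description precedes it below -/
import Mathlib

section
/- Fix K ∈ ℕ with K ≥ 1, and let P_K := ∏_{k=1}^{K} ∏_{(T,v) ∈ 𝓕_k} g(T,v)^{f_K(k)}. Then for every ε > 0, asymptotically almost surely c(𝒯_n) ≤ (2^{h(K)} · P_K + ε)^n. -/
/-!
Root a labelled tree at a vertex and encode it by its parent map. If `g(v)` is one plus the number
of subtrees of the fringe subtree at `v` that contain `v`, then `g(v) - 1` is the product of `g`
over the children of `v`. Hence `g(v)` is the product of the factors `g(x) / (g(x) - 1) ≤ 2` over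
the descendants `x` of `v`, and keeping the exact factor only where the fringe subtree has at most
`K` vertices gives `c(T) ≤ n 2^n exp(F(T))`, where `F` is an additive functional whose toll depends
on small fringe subtrees only.

Cutting off the fringe subtree at a vertex exhibits the pair of a tree and a vertex as two smaller
trees together with the vertex at which they are joined. With Cayley's formula this gives the first
moment of `F` exactly and the second moment up to `O(n)`, because changing one parent pointer only
affects tolls along two ancestral paths. The proportion of vertices with a fringe subtree of
size `k` converges by the Poisson limit theorem, so `F / n` converges in probability to a sum over
rooted trees with at most `K` vertices. Expanding `log (g - 1)` over the children of the root and
summing over trees expresses that sum through `log g` alone, with coefficients `f_K`.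
-/

open Filter Topology
open scoped Classical

/-- The number of subtrees of a graph `G` on `Fin n`: the number of (nonempty) vertex
subsets inducing a connected subgraph. -/
noncomputable def subtreeCount {n : ℕ} (G : SimpleGraph (Fin n)) : ℕ :=
  Nat.card {S : Set (Fin n) // (G.induce S).Connected}

/-- The probability that a uniformly random labelled tree on `n` vertices satisfies `p`. -/
noncomputable def treeProb (n : ℕ) (p : SimpleGraph (Fin n) → Prop) : ℝ :=
  (Nat.card {G : SimpleGraph (Fin n) // G.IsTree ∧ p G} : ℝ) /
    (Nat.card {G : SimpleGraph (Fin n) // G.IsTree} : ℝ)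

/-- `g(T,v)`: one plus the number of subtrees of `T` containing `v`. -/
noncomputable def gval {k : ℕ} (T : SimpleGraph (Fin k)) (v : Fin k) : ℕ :=
  1 + Nat.card {S : Set (Fin k) // v ∈ S ∧ (T.induce S).Connected}

/-- `f_K(k) = e^{-k}/k! - ∑_{ℓ=k+1}^K (ℓ-k)^{ℓ-k-1} C(ℓ, ℓ-k) e^{-ℓ}/ℓ!`. -/
noncomputable def fK (K k : ℕ) : ℝ :=
  Real.exp (-(k : ℝ)) / (Nat.factorial k) -
    ∑ l ∈ Finset.Icc (k + 1) K,
      ((l - k : ℕ) : ℝ) ^ (l - k - 1) * (Nat.choose l (l - k)) *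
        Real.exp (-(l : ℝ)) / (Nat.factorial l)

/-- `h(K) = 1 - ∑_{k=1}^K k^{k-1} e^{-k}/k!`. -/
noncomputable def hfun (K : ℕ) : ℝ :=
  1 - ∑ k ∈ Finset.Icc 1 K, (k : ℝ) ^ (k - 1) * Real.exp (-(k : ℝ)) / (Nat.factorial k)

/-- `P_K = ∏_{k=1}^K ∏_{(T,v) ∈ 𝓕_k} g(T,v)^{f_K(k)}`. -/
noncomputable def PK (K : ℕ) : ℝ :=
  ∏ k ∈ Finset.Icc 1 K,
    ∏ T : SimpleGraph (Fin k), ∏ v : Fin k,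
      if T.IsTree then ((gval T v : ℝ)) ^ (fK K k) else 1

open Finset Function

section ParentMaps

variable {V : Type*} {p : V → V} {x y v w : V}

/-- `IsDescendant p x v` says that `v` is reached from `x` by following the parent map `p` zero or
more times. -/
def IsDescendant (p : V → V) (x v : V) : Prop :=
  Relation.ReflTransGen (fun a b => p a = b) x v

theorem IsDescendant.refl (p : V → V) (x : V) : IsDescendant p x x :=
  Relation.ReflTransGen.refl

theorem IsDescendant.trans (hxv : IsDescendant p x v) (hvw : IsDescendant p v w) :
    IsDescendant p x w :=
  Relation.ReflTransGen.trans hxv hvw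

theorem isDescendant_parent (p : V → V) (x : V) : IsDescendant p x (p x) :=
  Relation.ReflTransGen.single rfl

theorem isDescendant_iff_eq_or_parent :
    IsDescendant p x v ↔ x = v ∨ IsDescendant p (p x) v := by
  simp only [IsDescendant, Relation.ReflTransGen.cases_head_iff (a := x), exists_eq_left']

theorem IsDescendant.of_parent (h : IsDescendant p (p x) v) : IsDescendant p x v :=
  isDescendant_iff_eq_or_parent.2 (.inr h)

theorem IsDescendant.parent (h : IsDescendant p x v) (hx : x ≠ v) : IsDescendant p (p x) v :=
  (isDescendant_iff_eq_or_parent.1 h).resolve_left hx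

theorem IsDescendant.total (hv : IsDescendant p x v) (hw : IsDescendant p x w) :
    IsDescendant p v w ∨ IsDescendant p w v :=
  Relation.ReflTransGen.total_of_right_unique (fun _ _ _ h h' => h.symm.trans h') hv hw

theorem isDescendant_iff_eq_of_fixed (hx : p x = x) : IsDescendant p x v ↔ x = v := by
  refine ⟨fun h => ?_, fun h => h ▸ .refl p x⟩
  induction h with
  | refl => rfl
  | tail _ hbc ih => rw [← hbc, ← ih, hx]

theorem isDescendant_iff_eq_or_child :
    IsDescendant p x v ↔ x = v ∨ ∃ w, p w = v ∧ w ≠ v ∧ IsDescendant p x w := by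
  constructor
  · intro h
    induction h with
    | refl => exact .inl rfl
    | @tail b c hxb hbc ih =>
      by_cases hb : b = c
      · exact hb ▸ ih
      · exact .inr ⟨b, hbc, hb, hxb⟩
  · rintro (rfl | ⟨w, rfl, -, hw⟩)
    · exact .refl p x
    · exact hw.trans (isDescendant_parent p w)

/-- `IsRootedForest R p` says that `p` is the parent map of a rooted forest with root set `R`:
roots are their own parents, and every vertex has a root among its ancestors. Rooted trees are the
case `R = {r}`. -/
def IsRootedForest (R : Finset V) (p : V → V) : Prop :=
  (∀ r ∈ R, p r = r) ∧ ∀ x, ∃ r ∈ R, IsDescendant p x r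

namespace IsRootedForest

variable {R : Finset V} {r : V}

theorem mem_of_fixed (h : IsRootedForest R p) (hx : p x = x) : x ∈ R := by
  obtain ⟨r, hr, hxr⟩ := h.2 x
  exact (isDescendant_iff_eq_of_fixed hx).1 hxr ▸ hr

theorem antisymm (h : IsRootedForest R p) (hxy : IsDescendant p x y) (hyx : IsDescendant p y x) :
    x = y := by
  obtain ⟨r, hr, hxr⟩ := h.2 x
  induction hxr using Relation.ReflTransGen.head_induction_on generalizing y with
  | refl => exact (isDescendant_iff_eq_of_fixed (h.1 r hr)).1 hxy
  | @head x _ hx _ ih =>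
    subst hx
    by_contra hne
    have hpy : p x = y := ih (hxy.parent hne) (hyx.trans (isDescendant_parent p x))
    have hpx : p x = x := ih (hpy.symm ▸ hyx) (isDescendant_parent p x)
    exact hne (hpx.symm.trans hpy)

theorem not_isDescendant_child (h : IsRootedForest R p) (hw : p w = v) (hne : w ≠ v) :
    ¬ IsDescendant p v w := fun hvw =>
  hne (h.antisymm (hw ▸ isDescendant_parent p w) hvw)

theorem eq_of_isDescendant_siblings (h : IsRootedForest R p) (hv : p v = y) (hvy : v ≠ y)
    (hw : p w = y) (hwy : w ≠ y) (hxv : IsDescendant p x v) (hxw : IsDescendant p x w) : v = w := by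
  wlog hvw : IsDescendant p v w generalizing v w
  · exact (this hw hwy hv hvy hxw hxv ((hxv.total hxw).resolve_left hvw)).symm
  by_contra hne
  exact h.not_isDescendant_child hw hwy (hv ▸ hvw.parent hne)

theorem isDescendant_root (h : IsRootedForest {r} p) (x : V) : IsDescendant p x r := by
  simpa only [mem_singleton, exists_eq_left] using h.2 x

theorem root_isDescendant_iff (h : IsRootedForest {r} p) : IsDescendant p r v ↔ r = v :=
  isDescendant_iff_eq_of_fixed (h.1 r (mem_singleton_self r))

end IsRootedForest

section Fintype

variable [Fintype V]

/-- The rooted forests with root set `R`, as parent maps. -/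
noncomputable def rootedForests (R : Finset V) : Finset (V → V) := {p | IsRootedForest R p}

/-- The vertex set of the fringe subtree of `p` at `v`. -/
noncomputable def descendants (p : V → V) (v : V) : Finset V := {x | IsDescendant p x v}

/-- The children of `v`; a root is not counted among its own children. -/
noncomputable def children (p : V → V) (v : V) : Finset V := {w | p w = v ∧ w ≠ v}

@[simp]
theorem mem_rootedForests {R : Finset V} : p ∈ rootedForests R ↔ IsRootedForest R p := by
  simp only [rootedForests, mem_filter_univ]

@[simp]
theorem mem_descendants : x ∈ descendants p v ↔ IsDescendant p x v := by
  simp only [descendants, mem_filter_univ]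

@[simp]
theorem mem_children : w ∈ children p v ↔ p w = v ∧ w ≠ v := by
  simp only [children, mem_filter_univ]

theorem IsRootedForest.descendants_root {r : V} (h : IsRootedForest {r} p) :
    descendants p r = univ := by
  ext x
  simp only [mem_descendants, h.isDescendant_root x, mem_univ]

end Fintype

end ParentMaps

section FringeValue

variable {V : Type*} {p : V → V} {x v w : V} {R : Finset V}

/-- The vertex sets of subtrees containing `v` of the fringe subtree of `p` at `v`, together with
the empty set. -/
def rootedSubtrees (p : V → V) (v : V) : Set (Set V) :=
  {S | ∀ x ∈ S, IsDescendant p x v ∧ (x ≠ v → p x ∈ S)}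

/-- The value of the function `g(T, v)` of the paper at the fringe subtree `T` of `p` at `v`. -/
noncomputable def fringeValue (p : V → V) (v : V) : ℕ := (rootedSubtrees p v).ncard

theorem mem_of_mem_rootedSubtrees {S : Set V} (hS : S ∈ rootedSubtrees p v) (hx : x ∈ S) :
    v ∈ S := by
  have hxv := (hS x hx).1
  induction hxv using Relation.ReflTransGen.head_induction_on with
  | refl => exact hx
  | @head x _ hx' _ ih =>
    subst hx'
    by_cases hxv : x = v
    · exact hxv ▸ hx
    · exact ih ((hS x hx).2 hxv)

theorem rootedSubtrees_eq_insert (p : V → V) (v : V) :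
    rootedSubtrees p v = insert ∅ {S | v ∈ S ∧ S ∈ rootedSubtrees p v} := by
  ext S
  rw [Set.mem_insert_iff, Set.mem_ofPred_eq]
  constructor
  · intro hS
    exact S.eq_empty_or_nonempty.imp_right fun ⟨x, hx⟩ => ⟨mem_of_mem_rootedSubtrees hS hx, hS⟩
  · rintro (rfl | ⟨-, hS⟩)
    · exact fun x hx => hx.elim
    · exact hS

theorem fringeValue_eq_one_add [Finite V] (p : V → V) (v : V) :
    fringeValue p v = 1 + {S | v ∈ S ∧ S ∈ rootedSubtrees p v}.ncard := by
  rw [fringeValue, congrArg Set.ncard (rootedSubtrees_eq_insert p v),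
    Set.ncard_insert_of_notMem (fun h => h.1) (Set.toFinite _), add_comm]

theorem two_le_fringeValue [Finite V] (p : V → V) (v : V) : 2 ≤ fringeValue p v := by
  have hv : {v} ∈ {S | v ∈ S ∧ S ∈ rootedSubtrees p v} :=
    ⟨rfl, fun x hx => ⟨hx ▸ .refl p x, fun hne => (hne hx).elim⟩⟩
  have := (Set.ncard_pos (Set.toFinite _)).2 ⟨_, hv⟩
  rw [fringeValue_eq_one_add]
  lia

theorem insert_iUnion_mem_rootedSubtrees {ι : Type*} {c : ι → V} (hc : ∀ i, p (c i) = v)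
    {F : ι → Set V} (hF : ∀ i, F i ∈ rootedSubtrees p (c i)) :
    insert v (⋃ i, F i) ∈ rootedSubtrees p v := by
  rintro x (rfl | hx)
  · exact ⟨.refl p x, fun h => (h rfl).elim⟩
  · obtain ⟨i, hi⟩ := Set.mem_iUnion.1 hx
    refine ⟨(hF i x hi).1.trans (hc i ▸ isDescendant_parent p (c i)), fun _ => ?_⟩
    by_cases hxc : x = c i
    · exact .inl (hxc ▸ hc i)
    · exact .inr (Set.mem_iUnion.2 ⟨i, (hF i x hi).2 hxc⟩)

theorem descendants_eq_insert_biUnion [Fintype V] (p : V → V) (v : V) :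
    descendants p v = insert v ((children p v).biUnion (descendants p)) := by
  ext x
  simp only [mem_descendants, mem_insert, mem_biUnion, mem_children, and_assoc]
  exact isDescendant_iff_eq_or_child

namespace IsRootedForest

theorem inter_mem_rootedSubtrees (h : IsRootedForest R p) (hw : p w = v) (hne : w ≠ v) {S : Set V}
    (hS : S ∈ rootedSubtrees p v) : S ∩ {x | IsDescendant p x w} ∈ rootedSubtrees p w := by
  rintro x ⟨hxS, hxw⟩
  refine ⟨hxw, fun hx => ⟨(hS x hxS).2 ?_, hxw.parent hx⟩⟩
  rintro rfl
  exact h.not_isDescendant_child hw hne hxw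

variable [Fintype V]

/-- A subtree containing `v` is cut by the children of `v` into one, possibly empty, rooted subtree
at each child. -/
noncomputable def rootedSubtreesEquivPi (h : IsRootedForest R p) (v : V) :
    {S | v ∈ S ∧ S ∈ rootedSubtrees p v} ≃ ∀ w : children p v, rootedSubtrees p w where
  toFun S w := ⟨S ∩ {x | IsDescendant p x w},
    h.inter_mem_rootedSubtrees (mem_children.1 w.2).1 (mem_children.1 w.2).2 S.2.2⟩
  invFun F := ⟨insert v (⋃ w, F w), Set.mem_insert v _,
    insert_iUnion_mem_rootedSubtrees (fun w => (mem_children.1 w.2).1) fun w => (F w).2⟩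
  left_inv := by
    rintro ⟨S, hvS, hS⟩
    refine Subtype.ext (Set.Subset.antisymm ?_ fun x hx => ?_)
    · exact Set.insert_subset hvS (Set.iUnion_subset fun w => Set.inter_subset_left)
    · rcases isDescendant_iff_eq_or_child.1 (hS x hx).1 with rfl | ⟨w, hw, hne, hxw⟩
      · exact .inl rfl
      · exact .inr (Set.mem_iUnion.2 ⟨⟨w, mem_children.2 ⟨hw, hne⟩⟩, hx, hxw⟩)
  right_inv := by
    intro F
    funext ⟨w, hw⟩
    obtain ⟨hwv, hwne⟩ := mem_children.1 hw
    refine Subtype.ext (Set.Subset.antisymm ?_ fun x hx => ?_)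
    · rintro x ⟨rfl | hx, hxw⟩
      · exact (h.not_isDescendant_child hwv hwne hxw).elim
      · obtain ⟨⟨w', hw'⟩, hxF⟩ := Set.mem_iUnion.1 hx
        obtain ⟨hwv', hwne'⟩ := mem_children.1 hw'
        obtain rfl : w = w' :=
          h.eq_of_isDescendant_siblings hwv hwne hwv' hwne' hxw ((F ⟨w', hw'⟩).2 x hxF).1
        exact hxF
    · exact ⟨.inr (Set.mem_iUnion.2 ⟨⟨w, hw⟩, hx⟩), ((F ⟨w, hw⟩).2 x hx).1⟩

theorem fringeValue_eq_one_add_prod (h : IsRootedForest R p) (v : V) :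
    fringeValue p v = 1 + ∏ w ∈ children p v, fringeValue p w := by
  rw [fringeValue_eq_one_add, ← Nat.card_coe_set_eq, Nat.card_congr (h.rootedSubtreesEquivPi v),
    Nat.card_pi]
  simp only [Nat.card_coe_set_eq]
  exact congrArg (1 + ·) (prod_coe_sort (children p v) (fringeValue p))

theorem prod_descendants {M : Type*} [CommMonoid M] (h : IsRootedForest R p) (f : V → M) (v : V) :
    ∏ x ∈ descendants p v, f x = f v * ∏ w ∈ children p v, ∏ x ∈ descendants p w, f x := by
  rw [descendants_eq_insert_biUnion, prod_insert, prod_biUnion]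
  · intro w hw w' hw' hne
    rw [mem_coe, mem_children] at hw hw'
    refine disjoint_left.2 fun x hx hx' => hne ?_
    exact h.eq_of_isDescendant_siblings hw.1 hw.2 hw'.1 hw'.2 (mem_descendants.1 hx)
      (mem_descendants.1 hx')
  · simp only [mem_biUnion, mem_children, mem_descendants, not_exists, not_and]
    exact fun w hw => h.not_isDescendant_child hw.1 hw.2

theorem card_descendants_lt (h : IsRootedForest R p) (hw : w ∈ children p v) :
    #(descendants p w) < #(descendants p v) := by
  obtain ⟨hwv, hne⟩ := mem_children.1 hw
  refine card_lt_card (ssubset_iff_of_subset (fun x hx => ?_) |>.2 ⟨v, ?_, ?_⟩)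
  · exact mem_descendants.2 ((mem_descendants.1 hx).trans (hwv ▸ isDescendant_parent p w))
  · exact mem_descendants.2 (.refl p v)
  · exact fun hv => h.not_isDescendant_child hwv hne (mem_descendants.1 hv)

theorem children_induction (h : IsRootedForest R p) {P : V → Prop}
    (ih : ∀ v, (∀ w ∈ children p v, P w) → P v) (v : V) : P v :=
  ih v fun w _ => h.children_induction ih w
termination_by #(descendants p v)
decreasing_by exact h.card_descendants_lt ‹_›

theorem fringeValue_le_prod (h : IsRootedForest R p) {α : V → ℝ} (hα : ∀ v, 0 ≤ α v)
    (hle : ∀ v, (fringeValue p v : ℝ) ≤ α v * (fringeValue p v - 1)) (v : V) :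
    (fringeValue p v : ℝ) ≤ ∏ x ∈ descendants p v, α x := by
  induction v using h.children_induction with
  | ih v ih =>
    calc (fringeValue p v : ℝ)
        ≤ α v * (fringeValue p v - 1) := hle v
      _ = α v * ∏ w ∈ children p v, (fringeValue p w : ℝ) := by
        rw [h.fringeValue_eq_one_add_prod v]
        push_cast
        rw [add_sub_cancel_left]
      _ ≤ α v * ∏ w ∈ children p v, ∏ x ∈ descendants p w, α x := by
        gcongr with w hw
        · exact hα v
        · exact ih w hw
      _ = ∏ x ∈ descendants p v, α x := (h.prod_descendants α v).symm

end IsRootedForest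

end FringeValue

section Relabelling

variable {U V : Type*} {e : U ↪ V} {q : U → U} {p : V → V} {u w : U} {y : V}

theorem isDescendant_apply_iff (hqp : Semiconj e q p) :
    IsDescendant p (e u) (e w) ↔ IsDescendant q u w := by
  constructor
  · intro h
    generalize hy : e u = y at h
    induction h using Relation.ReflTransGen.head_induction_on generalizing u with
    | refl => exact e.injective hy ▸ .refl q u
    | head hbc _ ih => exact .of_parent (ih (by rw [hqp.eq, hy, hbc]))
  · exact Relation.ReflTransGen.lift (p := fun a b => p a = b) e
      (fun a b hab => by rw [onFun_apply, ← hqp.eq, hab]) u w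

theorem mem_range_of_isDescendant (hp : ∀ y, p y ∈ Set.range e → y ∈ Set.range e)
    (h : IsDescendant p y (e w)) : y ∈ Set.range e := by
  induction h using Relation.ReflTransGen.head_induction_on with
  | refl => exact ⟨w, rfl⟩
  | head hbc _ ih => exact hp _ (hbc ▸ ih)

theorem descendants_apply [Fintype U] [Fintype V] (hqp : Semiconj e q p)
    (hp : ∀ y, p y ∈ Set.range e → y ∈ Set.range e) (w : U) :
    descendants p (e w) = (descendants q w).map e := by
  ext y
  simp only [mem_descendants, Finset.mem_map]
  constructor
  · intro h
    obtain ⟨u, rfl⟩ := mem_range_of_isDescendant hp h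
    exact ⟨u, (isDescendant_apply_iff hqp).1 h, rfl⟩
  · rintro ⟨u, hu, rfl⟩
    exact (isDescendant_apply_iff hqp).2 hu

theorem image_mem_rootedSubtrees_iff (hqp : Semiconj e q p) {S : Set U} :
    e '' S ∈ rootedSubtrees p (e w) ↔ S ∈ rootedSubtrees q w := by
  refine Set.forall_mem_image.trans (forall₂_congr fun x _ => and_congr ?_ ?_)
  · exact isDescendant_apply_iff hqp
  · rw [e.injective.ne_iff, ← hqp.eq, e.injective.mem_set_image]

theorem fringeValue_apply (hqp : Semiconj e q p)
    (hp : ∀ y, p y ∈ Set.range e → y ∈ Set.range e) (w : U) :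
    fringeValue p (e w) = fringeValue q w := by
  have himage : rootedSubtrees p (e w) = Set.image e '' rootedSubtrees q w := by
    refine Set.Subset.antisymm (fun S hS => ?_) ?_
    · obtain ⟨S, rfl⟩ := Set.subset_range_iff_exists_image_eq.1 fun x hx =>
        mem_range_of_isDescendant hp (hS x hx).1
      exact ⟨S, (image_mem_rootedSubtrees_iff hqp).1 hS, rfl⟩
    · rintro _ ⟨S, hS, rfl⟩
      exact (image_mem_rootedSubtrees_iff hqp).2 hS
  rw [fringeValue, himage, Set.ncard_image_of_injective _ e.injective.image_injective, fringeValue]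

section Conj

variable (e : U ≃ V) (q : U → U)

theorem descendants_conj [Fintype U] [Fintype V] (w : U) :
    descendants (e.conj q) (e w) = (descendants q w).map e.toEmbedding :=
  descendants_apply (e := e.toEmbedding) (e.semiconj_conj q) (fun y _ => e.surjective y) w

theorem fringeValue_conj (w : U) : fringeValue (e.conj q) (e w) = fringeValue q w :=
  fringeValue_apply (e := e.toEmbedding) (e.semiconj_conj q) (fun y _ => e.surjective y) w

variable {q}

theorem isRootedForest_conj_iff {R : Finset U} :
    IsRootedForest (R.map e.toEmbedding) (e.conj q) ↔ IsRootedForest R q := by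
  refine and_congr ?_ ?_
  · simp only [forall_mem_map, Equiv.coe_toEmbedding, Equiv.conj_apply, e.symm_apply_apply,
      e.apply_eq_iff_eq]
  · rw [e.surjective.forall]
    refine forall_congr' fun x => ?_
    simp only [mem_map_equiv, e.surjective.exists, e.symm_apply_apply]
    exact exists_congr fun r => and_congr_right fun _ =>
      isDescendant_apply_iff (e := e.toEmbedding) (e.semiconj_conj q)

theorem sum_rootedForests_map [Fintype U] [Fintype V] {M : Type*} [AddCommMonoid M] (R : Finset U)
    (F : (V → V) → M) :
    ∑ p ∈ rootedForests (R.map e.toEmbedding), F p = ∑ q ∈ rootedForests R, F (e.conj q) := by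
  refine (sum_equiv e.conj (fun q => ?_) fun q _ => rfl).symm
  rw [mem_rootedForests, mem_rootedForests, isRootedForest_conj_iff]

end Conj

end Relabelling

section DisjointUnion

variable {A B : Type*} (q : A → A) (p : B → B)

theorem mem_range_inl_of_sumMap (y : A ⊕ B)
    (h : Sum.map q p y ∈ Set.range (Embedding.inl : A ↪ A ⊕ B)) :
    y ∈ Set.range (Embedding.inl : A ↪ A ⊕ B) := by
  rcases y with a | b
  · exact ⟨a, rfl⟩
  · obtain ⟨a, ha⟩ := h
    cases ha

theorem mem_range_inr_of_sumMap (y : A ⊕ B)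
    (h : Sum.map q p y ∈ Set.range (Embedding.inr : B ↪ A ⊕ B)) :
    y ∈ Set.range (Embedding.inr : B ↪ A ⊕ B) := by
  rcases y with a | b
  · obtain ⟨b, hb⟩ := h
    cases hb
  · exact ⟨b, rfl⟩

theorem not_isDescendant_sumMap_inr_inl (a : A) (b : B) :
    ¬ IsDescendant (Sum.map q p) (.inr b) (.inl a) := by
  intro h
  obtain ⟨a', ha'⟩ := mem_range_of_isDescendant (e := .inl) (mem_range_inl_of_sumMap q p) h
  cases ha'

theorem descendants_sumMap_inl [Fintype A] [Fintype B] (a : A) :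
    descendants (Sum.map q p) (.inl a) = (descendants q a).map .inl :=
  descendants_apply (e := .inl) (fun _ => rfl) (mem_range_inl_of_sumMap q p) a

theorem descendants_sumMap_inr [Fintype A] [Fintype B] (b : B) :
    descendants (Sum.map q p) (.inr b) = (descendants p b).map .inr :=
  descendants_apply (e := .inr) (fun _ => rfl) (mem_range_inr_of_sumMap q p) b

theorem fringeValue_sumMap_inl (a : A) : fringeValue (Sum.map q p) (.inl a) = fringeValue q a :=
  fringeValue_apply (e := .inl) (fun _ => rfl) (mem_range_inl_of_sumMap q p) a

theorem fringeValue_sumMap_inr (b : B) : fringeValue (Sum.map q p) (.inr b) = fringeValue p b :=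
  fringeValue_apply (e := .inr) (fun _ => rfl) (mem_range_inr_of_sumMap q p) b

variable {q p}

theorem isRootedForest_sumMap_iff {R : Finset A} {R' : Finset B} :
    IsRootedForest (R.disjSum R') (Sum.map q p) ↔ IsRootedForest R q ∧ IsRootedForest R' p := by
  have hl (a a' : A) : IsDescendant (Sum.map q p) (.inl a) (.inl a') ↔ IsDescendant q a a' :=
    isDescendant_apply_iff (e := .inl) fun _ => rfl
  have hr (b b' : B) : IsDescendant (Sum.map q p) (.inr b) (.inr b') ↔ IsDescendant p b b' :=
    isDescendant_apply_iff (e := .inr) fun _ => rfl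
  have hlr (a : A) (b : B) : ¬ IsDescendant (Sum.map q p) (.inl a) (.inr b) := by
    intro h
    obtain ⟨b', hb'⟩ := mem_range_of_isDescendant (e := .inr) (mem_range_inr_of_sumMap q p) h
    cases hb'
  simp only [IsRootedForest, Sum.forall, Sum.exists, inl_mem_disjSum, inr_mem_disjSum,
    Sum.map_inl, Sum.map_inr, Sum.inl.injEq, Sum.inr.injEq, hl, hr, hlr,
    not_isDescendant_sumMap_inr_inl, and_false, exists_false, or_false, false_or]
  tauto

end DisjointUnion

section Attach

variable {V : Type*} [DecidableEq V] {f p : V → V} {x y a w : V} {R : Finset V}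

theorem isDescendant_update_iff (hx : f x = x) :
    IsDescendant (update f x y) a w ↔
      IsDescendant f a w ∨ IsDescendant f a x ∧ IsDescendant f y w := by
  have hmono : ∀ {a w}, IsDescendant f a w → IsDescendant (update f x y) a w := by
    intro a w h
    induction h using Relation.ReflTransGen.head_induction_on with
    | refl => exact .refl _ w
    | @head a b hab _ ih =>
      by_cases hax : a = x
      · obtain rfl : b = a := by rw [← hab, hax, hx]
        exact ih
      · exact .of_parent (by rwa [update_of_ne hax, hab])
  constructor
  · intro h
    induction h using Relation.ReflTransGen.head_induction_on with
    | refl => exact .inl (.refl f w)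
    | @head a b hab _ ih =>
      by_cases hax : a = x
      · obtain rfl : y = b := by rwa [hax, update_self] at hab
        exact .inr ⟨hax ▸ .refl f a, ih.elim id And.right⟩
      · rw [update_of_ne hax] at hab
        subst hab
        exact ih.imp .of_parent (And.imp_left .of_parent)
  · rintro (h | ⟨hax, hyw⟩)
    · exact hmono h
    · exact (hmono hax).trans (.of_parent (by rw [update_self]; exact hmono hyw))

theorem isDescendant_update_iff_of_not (hx : f x = x) (hyw : ¬ IsDescendant f y w) :
    IsDescendant (update f x y) a w ↔ IsDescendant f a w := by
  rw [isDescendant_update_iff hx, or_iff_left fun h => hyw h.2]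

theorem descendants_update_of_not [Fintype V] (hx : f x = x) (hyw : ¬ IsDescendant f y w) :
    descendants (update f x y) w = descendants f w := by
  ext a
  rw [mem_descendants, mem_descendants, isDescendant_update_iff_of_not hx hyw]

theorem descendants_subset_update [Fintype V] (hx : f x = x) :
    descendants f w ⊆ descendants (update f x y) w := fun _ ha =>
  mem_descendants.2 ((isDescendant_update_iff hx).2 (.inl (mem_descendants.1 ha)))

theorem fringeValue_update_of_not (hx : f x = x) (hyw : ¬ IsDescendant f y w) :
    fringeValue (update f x y) w = fringeValue f w := by
  refine congrArg Set.ncard (Set.ext fun _ => forall₂_congr fun a _ => ?_)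
  rw [isDescendant_update_iff_of_not hx hyw]
  refine and_congr_right fun haw => forall_congr' fun hne => ?_
  have hax : a ≠ x := fun hax => hne ((isDescendant_iff_eq_of_fixed (hax ▸ hx)).1 haw)
  rw [update_of_ne hax]

namespace IsRootedForest

theorem update_self (hp : IsRootedForest R p) (hxR : x ∉ R) :
    IsRootedForest (insert x R) (update p x x) ∧ ¬ IsDescendant (update p x x) (p x) x := by
  have hpx : update (update p x x) x (p x) = p := by rw [update_idem, update_eq_self]
  have hiff {a w : V} : IsDescendant p a w ↔ IsDescendant (update p x x) a w ∨
      IsDescendant (update p x x) a x ∧ IsDescendant (update p x x) (p x) w := by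
    conv_lhs => rw [← hpx]
    exact isDescendant_update_iff (Function.update_self x x p)
  refine ⟨⟨fun r hr => ?_, fun a => ?_⟩, fun h => hxR (hp.mem_of_fixed ?_)⟩
  · by_cases hrx : r = x
    · rw [hrx, Function.update_self]
    · rw [update_of_ne hrx, hp.1 r (mem_of_mem_insert_of_ne hr hrx)]
  · obtain ⟨r, hr, har⟩ := hp.2 a
    rcases hiff.1 har with har | ⟨hax, -⟩
    · exact ⟨r, mem_insert_of_mem hr, har⟩
    · exact ⟨x, mem_insert_self x R, hax⟩
  · exact hp.antisymm (hiff.2 (.inl h)) (isDescendant_parent p x)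

theorem update_of_not_isDescendant (hf : IsRootedForest (insert x R) f) (hxR : x ∉ R)
    (hyx : ¬ IsDescendant f y x) : IsRootedForest R (update f x y) := by
  have hx : f x = x := hf.1 x (mem_insert_self x R)
  refine ⟨fun r hr => ?_, fun a => ?_⟩
  · rw [update_of_ne (ne_of_mem_of_not_mem hr hxR), hf.1 r (mem_insert_of_mem hr)]
  · obtain ⟨r, hr, har⟩ := hf.2 a
    obtain ⟨s, hs, hys⟩ := hf.2 y
    have hsR : s ∈ R := mem_of_mem_insert_of_ne hs fun hsx => hyx (hsx ▸ hys)
    by_cases hrx : r = x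
    · exact ⟨s, hsR, (isDescendant_update_iff hx).2 (.inr ⟨hrx ▸ har, hys⟩)⟩
    · exact ⟨r, mem_of_mem_insert_of_ne hr hrx, (isDescendant_update_iff hx).2 (.inl har)⟩

end IsRootedForest

theorem sum_rootedForests_eq_sum_update [Fintype V] {M : Type*} [AddCommMonoid M] (hxR : x ∉ R)
    (F : (V → V) → M) :
    ∑ p ∈ rootedForests R, F p =
      ∑ f ∈ rootedForests (insert x R), ∑ y ∈ (descendants f x)ᶜ, F (update f x y) := by
  rw [sum_sigma']
  refine sum_nbij' (fun p => ⟨update p x x, p x⟩) (fun fy => update fy.1 x fy.2) ?_ ?_ ?_ ?_ ?_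
  · intro p hp
    have := (mem_rootedForests.1 hp).update_self hxR
    simpa only [mem_sigma, mem_rootedForests, mem_compl, mem_descendants] using this
  · rintro ⟨f, y⟩ hfy
    simp only [mem_sigma, mem_rootedForests, mem_compl, mem_descendants] at hfy
    exact mem_rootedForests.2 (hfy.1.update_of_not_isDescendant hxR hfy.2)
  · intro p _
    rw [update_idem, update_eq_self]
  · rintro ⟨f, y⟩ hfy
    have hx : f x = x :=
      (mem_rootedForests.1 (mem_sigma.1 hfy).1).1 x (mem_insert_self x R)
    simp only [update_idem, update_self, Sigma.mk.injEq, heq_eq_eq, and_true]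
    rw [update_eq_self_iff, hx]
  · intro p _
    rw [update_idem, update_eq_self]

end Attach

section ForestCount

variable {V : Type*} [Fintype V] {f : V → V} {x z : V} {R : Finset V}

theorem IsRootedForest.sum_card_descendants (hf : IsRootedForest R f) :
    ∑ z ∈ R, #(descendants f z) = Fintype.card V := by
  rw [← card_biUnion, ← card_univ]
  · congr 1
    ext x
    simpa only [mem_biUnion, mem_descendants, mem_univ, iff_true] using hf.2 x
  · intro z hz z' hz' hne
    refine disjoint_left.2 fun x hx hx' => hne ?_
    rcases (mem_descendants.1 hx).total (mem_descendants.1 hx') with h | h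
    · exact (isDescendant_iff_eq_of_fixed (hf.1 z hz)).1 h
    · exact ((isDescendant_iff_eq_of_fixed (hf.1 z' hz')).1 h).symm

theorem rootedForests_univ : rootedForests (univ : Finset V) = {id} := by
  ext p
  rw [mem_rootedForests, mem_singleton]
  refine ⟨fun hp => funext fun x => hp.1 x (mem_univ x), ?_⟩
  rintro rfl
  exact ⟨fun _ _ => rfl, fun x => ⟨x, mem_univ x, .refl id x⟩⟩

theorem card_rootedForests_erase [DecidableEq V] (hx : x ∈ R) (hz : z ∈ R) :
    #(rootedForests (R.erase z)) = #(rootedForests (R.erase x)) := by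
  have hswap : (R.erase x).map (Equiv.swap x z).toEmbedding = R.erase z := by
    ext a
    simp only [mem_map_equiv, Equiv.symm_swap, mem_erase, Equiv.swap_apply_def]
    grind
  rw [card_eq_sum_ones, ← hswap, sum_rootedForests_map, card_eq_sum_ones]

theorem card_insert_mul_card_rootedForests [DecidableEq V] (hx : x ∉ R) :
    #(insert x R) * #(rootedForests R) =
      #R * (#(rootedForests (insert x R)) * Fintype.card V) := by
  have hcount : ∀ z ∈ insert x R, #(rootedForests R) =
      ∑ f ∈ rootedForests (insert x R), #(descendants f z)ᶜ := by
    intro z hz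
    have hswap := card_rootedForests_erase (mem_insert_self x R) hz
    rw [erase_insert hx] at hswap
    rw [← hswap, card_eq_sum_ones, sum_rootedForests_eq_sum_update (notMem_erase z _),
      insert_erase hz]
    simp only [card_eq_sum_ones]
  refine Nat.add_right_cancel (m := #(rootedForests (insert x R)) * Fintype.card V) ?_
  calc #(insert x R) * #(rootedForests R) + #(rootedForests (insert x R)) * Fintype.card V
      = ∑ f ∈ rootedForests (insert x R), ∑ z ∈ insert x R, #(descendants f z)ᶜ +
          ∑ f ∈ rootedForests (insert x R), ∑ z ∈ insert x R, #(descendants f z) := by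
        rw [sum_comm, ← sum_congr rfl hcount, sum_const, smul_eq_mul,
          sum_congr rfl fun f hf => (mem_rootedForests.1 hf).sum_card_descendants, sum_const,
          smul_eq_mul]
    _ = #(insert x R) * (#(rootedForests (insert x R)) * Fintype.card V) := by
        simp only [← sum_add_distrib, card_compl_add_card, sum_const, smul_eq_mul]
        ring
    _ = #R * (#(rootedForests (insert x R)) * Fintype.card V) +
          #(rootedForests (insert x R)) * Fintype.card V := by
        rw [card_insert_of_notMem hx, add_mul, one_mul]

theorem card_rootedForests_mul_card (R : Finset V) :
    #(rootedForests R) * Fintype.card V = #R * Fintype.card V ^ (Fintype.card V - #R) := by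
  by_cases hR : R = univ
  · rw [hR, rootedForests_univ, card_singleton, card_univ, Nat.sub_self, pow_zero, one_mul, mul_one]
  obtain ⟨x, hx⟩ : ∃ x, x ∉ R := by simpa only [eq_univ_iff_forall, not_forall] using hR
  have hcard : #(insert x R) = #R + 1 := card_insert_of_notMem hx
  have hle : #(insert x R) ≤ Fintype.card V := card_le_univ _
  have hrec : #(rootedForests R) = #R * Fintype.card V ^ (Fintype.card V - #(insert x R)) := by
    refine Nat.eq_of_mul_eq_mul_left (card_pos.2 (insert_nonempty x R)) ?_
    rw [card_insert_mul_card_rootedForests hx, card_rootedForests_mul_card (insert x R)]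
    ring
  rw [hrec, mul_assoc, ← pow_succ]
  congr 2
  lia
termination_by Fintype.card V - #R

theorem card_rootedForests_singleton_mul_card (r : V) :
    #(rootedForests {r}) * Fintype.card V = Fintype.card V ^ (Fintype.card V - 1) := by
  rw [card_rootedForests_mul_card, card_singleton, one_mul]

end ForestCount

section Graft

variable {A B : Type*} {q : A → A} {v : A}

theorem IsRootedForest.sumMap_apply_inl_root (hq : IsRootedForest {v} q) (p : B → B) :
    Sum.map q p (.inl v) = .inl v :=
  congrArg Sum.inl (hq.1 v (mem_singleton_self v))

variable [DecidableEq A] [DecidableEq B]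

/-- Grafting of the tree `q` rooted at `v` onto the forest `p`, making `v` a child of `b`. -/
def graft (q : A → A) (p : B → B) (v : A) (b : B) : A ⊕ B → A ⊕ B :=
  update (Sum.map q p) (.inl v) (.inr b)

theorem IsRootedForest.fringeValue_graft_inl (hq : IsRootedForest {v} q) (p : B → B) (b : B) :
    fringeValue (graft q p v b) (.inl v) = fringeValue q v := by
  rw [graft, fringeValue_update_of_not (hq.sumMap_apply_inl_root p)
    (not_isDescendant_sumMap_inr_inl q p v b), fringeValue_sumMap_inl]

variable [Fintype A] [Fintype B]

theorem compl_map_inl : (univ.map .inl : Finset (A ⊕ B))ᶜ = univ.map .inr := by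
  ext (a | b) <;> simp

theorem IsRootedForest.descendants_graft_inl (hq : IsRootedForest {v} q) (p : B → B) (b : B) :
    descendants (graft q p v b) (.inl v) = univ.map .inl := by
  rw [graft, descendants_update_of_not (hq.sumMap_apply_inl_root p)
    (not_isDescendant_sumMap_inr_inl q p v b), descendants_sumMap_inl, hq.descendants_root]

theorem IsRootedForest.exists_eq_sumMap {r : B} {f : A ⊕ B → A ⊕ B}
    (hf : IsRootedForest {.inl v, .inr r} f)
    (hdesc : descendants f (.inl v) = univ.map .inl) : ∃ q p, f = Sum.map q p := by
  have hmem (x : A ⊕ B) : IsDescendant f x (.inl v) ↔ ∃ a, .inl a = x := by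
    simpa using congrArg (x ∈ ·) hdesc
  have hA (a : A) : ∃ a', Sum.inl a' = f (.inl a) := by
    by_cases ha : (.inl a : A ⊕ B) = .inl v
    · exact ⟨v, by rw [ha, hf.1 _ (mem_insert_self _ _)]⟩
    · exact (hmem _).1 (((hmem _).2 ⟨a, rfl⟩).parent ha)
  have hB (b : B) : ∃ b', Sum.inr b' = f (.inr b) := by
    rcases hfb : f (.inr b) with a | b'
    · obtain ⟨_, h⟩ := (hmem _).1 (.of_parent ((hmem (f (.inr b))).2 ⟨a, hfb.symm⟩))
      cases h
    · exact ⟨b', rfl⟩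
  choose q hq using hA
  choose p hp using hB
  exact ⟨q, p, funext fun x => x.casesOn (fun a => (hq a).symm) fun b => (hp b).symm⟩

theorem sum_filter_descendants_eq_sum_sumMap {M : Type*} [AddCommMonoid M] (v : A) (r : B)
    (F : (A ⊕ B → A ⊕ B) → M) :
    ∑ f ∈ rootedForests {.inl v, .inr r} with descendants f (.inl v) = univ.map .inl, F f =
      ∑ q ∈ rootedForests {v}, ∑ p ∈ rootedForests {r}, F (Sum.map q p) := by
  have hroots : ({.inl v, .inr r} : Finset (A ⊕ B)) = disjSum {v} {r} := rfl
  rw [← sum_product', eq_comm]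
  refine sum_nbij (fun qp => Sum.map qp.1 qp.2) ?_ ?_ ?_ fun _ _ => rfl
  · rintro ⟨q, p⟩ hqp
    simp only [mem_product, mem_rootedForests] at hqp
    rw [mem_filter, mem_rootedForests, hroots, isRootedForest_sumMap_iff,
      descendants_sumMap_inl, hqp.1.descendants_root]
    exact ⟨hqp, rfl⟩
  · rintro ⟨q, p⟩ - ⟨q', p'⟩ - h
    refine Prod.ext (funext fun a => ?_) (funext fun b => ?_)
    · exact Sum.inl_injective (congrFun h (.inl a))
    · exact Sum.inr_injective (congrFun h (.inr b))
  · intro f hf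
    rw [mem_coe, mem_filter, mem_rootedForests] at hf
    obtain ⟨q, p, rfl⟩ := hf.1.exists_eq_sumMap hf.2
    rw [hroots, isRootedForest_sumMap_iff] at hf
    refine ⟨(q, p), ?_, rfl⟩
    rw [mem_coe, mem_product, mem_rootedForests, mem_rootedForests]
    exact hf.1

theorem sum_filter_descendants_eq_sum_graft {M : Type*} [AddCommMonoid M] (v : A) (r : B)
    (F : (A ⊕ B → A ⊕ B) → M) :
    ∑ p ∈ rootedForests {.inr r} with descendants p (.inl v) = univ.map .inl, F p =
      ∑ q ∈ rootedForests {v}, ∑ p ∈ rootedForests {r}, ∑ b, F (graft q p v b) := by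
  refine Eq.trans ?_ (sum_filter_descendants_eq_sum_sumMap v r fun f =>
    ∑ b, F (update f (.inl v) (.inr b)))
  rw [sum_filter, sum_filter, sum_rootedForests_eq_sum_update (x := .inl v) (by simp)]
  refine sum_congr rfl fun f hf => ?_
  have hv : f (.inl v) = .inl v := (mem_rootedForests.1 hf).1 _ (mem_insert_self _ _)
  have hdesc : ∀ y ∈ (descendants f (.inl v))ᶜ,
      descendants (update f (.inl v) y) (.inl v) = descendants f (.inl v) := fun y hy =>
    descendants_update_of_not hv (by simpa only [mem_compl, mem_descendants] using hy)
  rw [sum_congr rfl fun y hy => by rw [hdesc y hy]]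
  split_ifs with h
  · rw [h, compl_map_inl, sum_map]
    rfl
  · exact sum_const_zero

end Graft

section FringeDecomposition

variable {V : Type*}

/-- The parent map on `V` grafting a tree on `S`, rooted at `v`, onto a forest on the complement. -/
noncomputable def graftOn (S : Finset V) (q : S → S) (p : {x // x ∉ S} → {x // x ∉ S}) (v : S)
    (b : {x // x ∉ S}) : V → V :=
  (Equiv.sumCompl (· ∈ S)).conj (graft q p v b)

theorem graftOn_apply_root (S : Finset V) (q : S → S) (p : {x // x ∉ S} → {x // x ∉ S}) (v : S)
    (b : {x // x ∉ S}) : graftOn S q p v b v = b := by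
  have hv : (Equiv.sumCompl (· ∈ S)).symm v = .inl v := by
    rw [Equiv.symm_apply_eq, Equiv.sumCompl_apply_inl]
  rw [graftOn, Equiv.conj_apply, hv, graft, update_self, Equiv.sumCompl_apply_inr]

variable {S : Finset V} {q : S → S} {v : S}

theorem IsRootedForest.fringeValue_graftOn (hq : IsRootedForest {v} q)
    (p : {x // x ∉ S} → {x // x ∉ S}) (b : {x // x ∉ S}) :
    fringeValue (graftOn S q p v b) v = fringeValue q v := by
  have h := fringeValue_conj (Equiv.sumCompl (· ∈ S)) (graft q p v b) (.inl v)
  rwa [hq.fringeValue_graft_inl, Equiv.sumCompl_apply_inl] at h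

theorem map_sumCompl_map_inl (S : Finset V) :
    (univ.map .inl : Finset (S ⊕ {x // x ∉ S})).map (Equiv.sumCompl (· ∈ S)).toEmbedding = S := by
  ext x
  obtain ⟨y, rfl⟩ := (Equiv.sumCompl (· ∈ S)).surjective x
  rw [mem_map_equiv, Equiv.symm_apply_apply]
  rcases y with a | b
  · simp
  · simpa using b.2

variable [Fintype V]

theorem IsRootedForest.descendants_graftOn (hq : IsRootedForest {v} q)
    (p : {x // x ∉ S} → {x // x ∉ S}) (b : {x // x ∉ S}) :
    descendants (graftOn S q p v b) v = S := by
  have h := descendants_conj (Equiv.sumCompl (· ∈ S)) (graft q p v b) (.inl v)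
  rwa [hq.descendants_graft_inl, map_sumCompl_map_inl, Equiv.sumCompl_apply_inl] at h

theorem sum_filter_descendants_eq_sum_graftOn {M : Type*} [AddCommMonoid M] (v : S)
    (r : {x // x ∉ S}) (F : (V → V) → M) :
    ∑ p ∈ rootedForests {(r : V)} with descendants p (v : V) = S, F p =
      ∑ q ∈ rootedForests {v}, ∑ p ∈ rootedForests {r}, ∑ b, F (graftOn S q p v b) := by
  have hroot : {(r : V)} = ({.inr r} : Finset (S ⊕ {x // x ∉ S})).map
      (Equiv.sumCompl (· ∈ S)).toEmbedding := by
    rw [map_singleton, Equiv.coe_toEmbedding, Equiv.sumCompl_apply_inr]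
  have hdesc (p) : descendants ((Equiv.sumCompl (· ∈ S)).conj p) v = S ↔
      descendants p (.inl v) = univ.map .inl := by
    have h := descendants_conj (Equiv.sumCompl (· ∈ S)) p (.inl v)
    rw [Equiv.sumCompl_apply_inl] at h
    rw [h]
    conv_lhs => rhs; rw [← map_sumCompl_map_inl S]
    exact (Finset.map_injective _).eq_iff
  refine Eq.trans ?_ (sum_filter_descendants_eq_sum_graft v r fun p =>
    F ((Equiv.sumCompl (· ∈ S)).conj p))
  rw [sum_filter, sum_filter, hroot, sum_rootedForests_map]
  exact sum_congr rfl fun p _ => if_congr (hdesc p) rfl rfl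

theorem sum_fringe {M : Type*} [AddCommMonoid M] (r : V) (F : (V → V) → V → M) :
    ∑ p ∈ rootedForests {r}, ∑ v ∈ univ.erase r, F p v =
      ∑ S : {S : Finset V // r ∉ S}, ∑ v : S.1, ∑ q ∈ rootedForests {v},
        ∑ p ∈ rootedForests {⟨r, S.2⟩}, ∑ b, F (graftOn S.1 q p v b) v := by
  have hmem (S : Finset V) : S ∈ (univ.erase r).powerset ↔ r ∉ S := by
    rw [mem_powerset, subset_erase, and_iff_right (subset_univ S)]
  have hfiber : ∀ p ∈ rootedForests {r}, ∑ v ∈ univ.erase r, F p v =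
      ∑ S : {S : Finset V // r ∉ S}, ∑ v : S.1, if descendants p v = S.1 then F p v else 0 := by
    intro p hp
    rw [mem_rootedForests] at hp
    rw [← sum_subtype (univ.erase r).powerset hmem fun S =>
        ∑ v : S, if descendants p v = S then F p v else 0,
      ← sum_fiberwise_of_maps_to (g := descendants p) (t := (univ.erase r).powerset)]
    · refine sum_congr rfl fun S hS => ?_
      rw [sum_coe_sort S fun v => if descendants p v = S then F p v else 0, ← sum_filter]
      refine sum_congr (Finset.ext fun v => ?_) fun _ _ => rfl
      rw [mem_filter, mem_filter, and_congr_left_iff]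
      rintro rfl
      have hr := (hmem _).1 hS
      simp only [mem_erase, mem_univ, and_true, mem_descendants, IsDescendant.refl, iff_true]
      rintro rfl
      exact hr (mem_descendants.2 (.refl p v))
    · intro v hv
      rw [hmem, mem_descendants, hp.root_isDescendant_iff]
      exact (ne_of_mem_erase hv).symm
  rw [sum_congr rfl hfiber, sum_comm]
  refine sum_congr rfl fun S _ => ?_
  rw [sum_comm]
  refine sum_congr rfl fun v _ => ?_
  rw [← sum_filter]
  exact sum_filter_descendants_eq_sum_graftOn v ⟨r, S.2⟩ fun p => F p v

theorem sum_notMem_apply_card (r : V) (H : ℕ → ℝ) :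
    ∑ S : {S : Finset V // r ∉ S}, H #S.1 =
      ∑ j ∈ range (Fintype.card V), ((Fintype.card V - 1).choose j : ℝ) * H j := by
  have hmem (S : Finset V) : S ∈ (univ.erase r).powerset ↔ r ∉ S := by
    rw [mem_powerset, subset_erase, and_iff_right (subset_univ S)]
  have hcard : #(univ.erase r) = Fintype.card V - 1 := by
    rw [card_erase_of_mem (mem_univ r), card_univ]
  rw [← sum_subtype (univ.erase r).powerset hmem fun S => H #S, sum_powerset_apply_card, hcard,
    Nat.sub_add_cancel (Fintype.card_pos_iff.2 ⟨r⟩)]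
  simp only [nsmul_eq_mul]

theorem card_notMem (S : Finset V) : Fintype.card {x // x ∉ S} = Fintype.card V - #S := by
  rw [Fintype.card_subtype_compl, Fintype.card_coe]

end FringeDecomposition

section RootedTreeSum

/-- The sum of `φ (g(T, v))` over the rooted labelled trees `(T, v)` on `k` vertices. -/
noncomputable def rootedTreeSum (φ : ℕ → ℝ) (k : ℕ) : ℝ :=
  ∑ v : Fin k, ∑ q ∈ rootedForests {v}, φ (fringeValue q v)

theorem rootedTreeSum_zero (φ : ℕ → ℝ) : rootedTreeSum φ 0 = 0 :=
  Fin.sum_univ_zero _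

variable {V : Type*} [Fintype V]

theorem sum_fringeValue_eq_rootedTreeSum (φ : ℕ → ℝ) :
    ∑ v : V, ∑ q ∈ rootedForests {v}, φ (fringeValue q v) =
      rootedTreeSum φ (Fintype.card V) := by
  let e := (Fintype.equivFin V).symm
  rw [rootedTreeSum, ← e.sum_comp]
  refine sum_congr rfl fun v _ => ?_
  have hroot : {e v} = ({v} : Finset _).map e.toEmbedding :=
    (Finset.map_singleton e.toEmbedding v).symm
  rw [hroot, sum_rootedForests_map]
  simp only [fringeValue_conj]

theorem rootedTreeSum_const (c : ℝ) {k : ℕ} (hk : k ≠ 0) :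
    rootedTreeSum (fun _ => c) k = k ^ (k - 1) * c := by
  have hcard (v : Fin k) : (#(rootedForests {v}) : ℝ) * k = k ^ (k - 1) := by
    exact_mod_cast Fintype.card_fin k ▸ card_rootedForests_singleton_mul_card v
  have hconst (v : Fin k) : ∑ _ ∈ rootedForests {v}, c = k ^ (k - 1) / k * c := by
    rw [sum_const, nsmul_eq_mul, ← hcard v, mul_div_cancel_right₀ _ (Nat.cast_ne_zero.2 hk)]
  rw [rootedTreeSum, sum_congr rfl fun v _ => hconst v, sum_const, card_univ, Fintype.card_fin,
    nsmul_eq_mul, ← mul_assoc, mul_div_cancel₀ _ (Nat.cast_ne_zero.2 hk)]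

theorem card_rootedForests_compl (S : Finset V) (r : {x // x ∉ S}) :
    (#(rootedForests {r}) : ℝ) * ((Fintype.card V - #S : ℕ) : ℝ) =
      ((Fintype.card V - #S : ℕ) : ℝ) ^ (Fintype.card V - #S - 1) := by
  exact_mod_cast card_notMem S ▸ card_rootedForests_singleton_mul_card r

theorem sub_card_ne_zero {S : Finset V} {r : V} (hr : r ∉ S) :
    ((Fintype.card V - #S : ℕ) : ℝ) ≠ 0 := by
  rw [← card_notMem]
  exact Nat.cast_ne_zero.2 (Fintype.card_pos_iff.2 ⟨⟨r, hr⟩⟩).ne'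

theorem IsRootedForest.log_fringeValue_sub_one {r : V} {p : V → V} (hp : IsRootedForest {r} p) :
    Real.log (fringeValue p r - 1) =
      ∑ v ∈ univ.erase r, if p v = r then Real.log (fringeValue p v) else 0 := by
  have hne (v : V) : (fringeValue p v : ℝ) ≠ 0 :=
    Nat.cast_ne_zero.2 (by have := two_le_fringeValue p v; lia)
  have hchildren : children p r = {v ∈ univ.erase r | p v = r} := by
    ext v
    simp only [mem_children, mem_filter, mem_erase, mem_univ, and_true]
    tauto
  rw [hp.fringeValue_eq_one_add_prod, Nat.cast_add, Nat.cast_one, Nat.cast_prod,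
    add_sub_cancel_left, Real.log_prod fun v _ => hne v, hchildren, sum_filter]

theorem sum_log_fringeValue_sub_one (r : V) :
    ∑ p ∈ rootedForests {r}, Real.log (fringeValue p r - 1) =
      ∑ k ∈ range (Fintype.card V), ((Fintype.card V - 1).choose k : ℝ) *
        (((Fintype.card V - k : ℕ) : ℝ) ^ (Fintype.card V - k - 1) /
          ((Fintype.card V - k : ℕ) : ℝ) * rootedTreeSum (fun g => Real.log g) k) := by
  have hgraft (S : {S : Finset V // r ∉ S}) (v : S.1) : ∀ q ∈ rootedForests {v},
      ∑ p ∈ rootedForests {(⟨r, S.2⟩ : {x // x ∉ S.1})}, ∑ b,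
        (if graftOn S.1 q p v b v = r then Real.log (fringeValue (graftOn S.1 q p v b) v) else 0) =
      ((Fintype.card V - #S.1 : ℕ) : ℝ) ^ (Fintype.card V - #S.1 - 1) /
        ((Fintype.card V - #S.1 : ℕ) : ℝ) * Real.log (fringeValue q v) := by
    intro q hq
    have hb (b : {x // x ∉ S.1}) : (b : V) = r ↔ b = ⟨r, S.2⟩ := by rw [Subtype.ext_iff]
    simp only [graftOn_apply_root, (mem_rootedForests.1 hq).fringeValue_graftOn, hb, sum_ite_eq',
      mem_univ, if_true, sum_const, nsmul_eq_mul]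
    rw [← card_rootedForests_compl S.1 ⟨r, S.2⟩,
      mul_div_cancel_right₀ _ (sub_card_ne_zero S.2)]
  rw [sum_congr rfl fun p hp => (mem_rootedForests.1 hp).log_fringeValue_sub_one, sum_fringe,
    ← sum_notMem_apply_card r]
  refine sum_congr rfl fun S _ => ?_
  rw [sum_congr rfl fun v _ => sum_congr rfl (hgraft S v)]
  simp only [← mul_sum]
  rw [sum_fringeValue_eq_rootedTreeSum fun g => Real.log g, Fintype.card_coe]

theorem rootedTreeSum_log_sub_one (l : ℕ) :
    rootedTreeSum (fun g => Real.log (g - 1)) l =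
      ∑ k ∈ range l, ((l - k : ℕ) : ℝ) ^ (l - k - 1) * l.choose (l - k) *
        rootedTreeSum (fun g => Real.log g) k := by
  have hroot (v : Fin l) := sum_log_fringeValue_sub_one v
  simp only [Fintype.card_fin] at hroot
  rw [rootedTreeSum, sum_congr rfl fun v _ => hroot v, sum_const, card_univ, Fintype.card_fin,
    nsmul_eq_mul, mul_sum]
  refine sum_congr rfl fun k hk => ?_
  rw [mem_range] at hk
  have hchoose : ((l - 1).choose k : ℝ) * l = l.choose k * ((l - k : ℕ) : ℝ) := by
    have h := Nat.choose_mul_succ_eq (l - 1) k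
    rw [Nat.sub_add_cancel (by lia)] at h
    exact_mod_cast h
  have hne : ((l - k : ℕ) : ℝ) ≠ 0 := Nat.cast_ne_zero.2 (by lia)
  rw [Nat.choose_symm hk.le, mul_left_comm, ← mul_assoc, hchoose]
  field_simp

end RootedTreeSum

section AdditiveFunctional

/-- The toll `τ s g` of a vertex with `s` descendants and fringe value `g` is bounded by one and
vanishes for fringe subtrees with more than `K` vertices. -/
structure IsToll (K : ℕ) (τ : ℕ → ℕ → ℝ) : Prop where
  abs_le_one (s g : ℕ) : |τ s g| ≤ 1
  eq_zero_of_lt {s : ℕ} (hs : K < s) (g : ℕ) : τ s g = 0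

variable {V : Type*} [Fintype V] {K : ℕ} {τ : ℕ → ℕ → ℝ}

/-- The additive functional of the parent map `p` with toll `τ`. -/
noncomputable def additiveFunctional (τ : ℕ → ℕ → ℝ) (p : V → V) : ℝ :=
  ∑ v, τ #(descendants p v) (fringeValue p v)

theorem additiveFunctional_conj {U : Type*} [Fintype U] (τ : ℕ → ℕ → ℝ) (e : U ≃ V) (q : U → U) :
    additiveFunctional τ (e.conj q) = additiveFunctional τ q := by
  simp only [additiveFunctional, ← e.sum_comp, descendants_conj, fringeValue_conj, card_map]

theorem additiveFunctional_sumMap {A B : Type*} [Fintype A] [Fintype B] (τ : ℕ → ℕ → ℝ)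
    (q : A → A) (p : B → B) : additiveFunctional τ (Sum.map q p) =
      additiveFunctional τ q + additiveFunctional τ p := by
  simp only [additiveFunctional, Fintype.sum_sum_type, descendants_sumMap_inl,
    descendants_sumMap_inr, fringeValue_sumMap_inl, fringeValue_sumMap_inr, card_map]

theorem sum_ite_mem_descendants_sumMap_inr_le {A B : Type*} [Fintype A] [Fintype B]
    [DecidableEq A] [DecidableEq B] (q : A → A) (p : B → B) (K : ℕ) :
    ∑ b : B, ∑ w : A ⊕ B, (if .inr b ∈ descendants (Sum.map q p) w ∧
      #(descendants (Sum.map q p) w) ≤ K then (2 : ℝ) else 0) ≤ Fintype.card B * (2 * K) := by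
  have hbound (y : B) : ∑ b, (if b ∈ descendants p y ∧ #(descendants p y) ≤ K then (2 : ℝ) else 0) ≤
      2 * K := by
    by_cases hy : #(descendants p y) ≤ K
    · have hy' : (#(descendants p y) : ℝ) ≤ K := Nat.cast_le.2 hy
      simp only [hy, and_true, sum_ite_mem, univ_inter, sum_const, nsmul_eq_mul]
      linarith
    · simp only [hy, and_false, if_false, sum_const_zero]
      positivity
  simp only [Fintype.sum_sum_type, mem_descendants, not_isDescendant_sumMap_inr_inl, false_and,
    if_false, sum_const_zero, zero_add]
  rw [sum_comm, ← nsmul_eq_mul, ← card_univ]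
  refine sum_le_card_nsmul _ _ _ fun y _ => ?_
  simpa only [← mem_descendants, descendants_sumMap_inr, card_map, Finset.mem_map,
    Embedding.inr_apply, Sum.inr.injEq, exists_eq_right] using hbound y

theorem IsRootedForest.additiveFunctional_eq_sum_erase {r : V} {p : V → V}
    (hp : IsRootedForest {r} p) (hτ : IsToll K τ) (hK : K < Fintype.card V) :
    additiveFunctional τ p = ∑ v ∈ univ.erase r, τ #(descendants p v) (fringeValue p v) := by
  rw [additiveFunctional, ← add_sum_erase _ _ (mem_univ r), hp.descendants_root, card_univ,
    hτ.eq_zero_of_lt hK, zero_add]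

namespace IsToll

theorem abs_additiveFunctional_le (hτ : IsToll K τ) (p : V → V) :
    |additiveFunctional τ p| ≤ Fintype.card V :=
  calc |additiveFunctional τ p| ≤ ∑ v, |τ #(descendants p v) (fringeValue p v)| :=
        abs_sum_le_sum_abs _ _
    _ ≤ ∑ _v : V, 1 := sum_le_sum fun _ _ => hτ.abs_le_one _ _
    _ = Fintype.card V := by rw [sum_const, card_univ, nsmul_one]

theorem abs_additiveFunctional_update_sub_le [DecidableEq V] (hτ : IsToll K τ) {f : V → V} {x : V}
    (hx : f x = x) (y : V) :
    |additiveFunctional τ (update f x y) - additiveFunctional τ f| ≤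
      ∑ w, if y ∈ descendants f w ∧ #(descendants f w) ≤ K then 2 else 0 := by
  rw [additiveFunctional, additiveFunctional, ← sum_sub_distrib]
  refine (abs_sum_le_sum_abs _ _).trans (sum_le_sum fun w _ => ?_)
  split_ifs with hw
  · refine (abs_sub _ _).trans ?_
    rw [← one_add_one_eq_two]
    exact add_le_add (hτ.abs_le_one _ _) (hτ.abs_le_one _ _)
  rw [not_and_or, mem_descendants, not_le] at hw
  rcases hw with hyw | hlarge
  · rw [descendants_update_of_not hx hyw, fringeValue_update_of_not hx hyw, sub_self, abs_zero]
  · have hlarge' := hlarge.trans_le (card_le_card (descendants_subset_update (y := y) hx))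
    rw [hτ.eq_zero_of_lt hlarge, hτ.eq_zero_of_lt hlarge', sub_self, abs_zero]

theorem abs_sum_additiveFunctional_graft_sub_le {A B : Type*} [Fintype A] [Fintype B]
    [DecidableEq A] [DecidableEq B] {q : A → A} {v : A} (hτ : IsToll K τ)
    (hq : IsRootedForest {v} q) (p : B → B) :
    |∑ b, additiveFunctional τ (graft q p v b) - Fintype.card B * additiveFunctional τ p| ≤
      Fintype.card B * (Fintype.card A + 2 * K) := by
  have hsplit : ∑ b, additiveFunctional τ (graft q p v b) -
      Fintype.card B * additiveFunctional τ p = Fintype.card B * additiveFunctional τ q +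
        ∑ b, (additiveFunctional τ (graft q p v b) - additiveFunctional τ (Sum.map q p)) := by
    rw [sum_sub_distrib, sum_const, card_univ, nsmul_eq_mul, additiveFunctional_sumMap]
    ring
  rw [hsplit, mul_add]
  refine (abs_add_le _ _).trans (add_le_add ?_ ?_)
  · rw [abs_mul, Nat.abs_cast]
    exact mul_le_mul_of_nonneg_left (hτ.abs_additiveFunctional_le q) (Nat.cast_nonneg _)
  · refine (abs_sum_le_sum_abs _ _).trans (le_trans (sum_le_sum fun b _ => ?_)
      (sum_ite_mem_descendants_sumMap_inr_le q p K))
    exact hτ.abs_additiveFunctional_update_sub_le (hq.sumMap_apply_inl_root p) (.inr b)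

end IsToll

end AdditiveFunctional

section Moments

/-- The coefficient `C(n-1, k) (n-k)^{n-k-1} / n^{n-1}`: the probability that a uniform vertex of a
uniform rooted labelled tree on `n` vertices has `k < n` descendants, divided by `k^{k-1}`, the
number of rooted labelled trees on `k` vertices. -/
noncomputable def fringeDensity (k n : ℕ) : ℝ :=
  (n - 1).choose k * ((n - k : ℕ) : ℝ) ^ (n - k - 1) / n ^ (n - 1)

/-- The mean per vertex of the additive functional with toll `τ` on trees with `n` vertices. -/
noncomputable def meanToll (K : ℕ) (τ : ℕ → ℕ → ℝ) (n : ℕ) : ℝ :=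
  ∑ k ∈ Icc 1 K, fringeDensity k n * rootedTreeSum (τ k) k

/-- An upper bound for the mean of the square of the additive functional with toll `τ` on trees with
`n` vertices, divided by `n`. -/
noncomputable def secondMomentBound (K : ℕ) (τ : ℕ → ℕ → ℝ) (n : ℕ) : ℝ :=
  ∑ k ∈ Icc 1 K, fringeDensity k n *
    (rootedTreeSum (τ k) k * (((n - k : ℕ) : ℝ) * meanToll K τ (n - k)) +
      rootedTreeSum (fun g => |τ k g|) k * (k + 2 * K))

variable {V : Type*} [Fintype V] {K : ℕ} {τ : ℕ → ℕ → ℝ}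

theorem sum_notMem_eq_sum_fringeDensity (r : V) (hK : K < Fintype.card V) {H : ℕ → ℝ}
    (hzero : H 0 = 0) (hlarge : ∀ k, K < k → H k = 0) :
    ∑ S : {S : Finset V // r ∉ S},
        ((Fintype.card V - #S.1 : ℕ) : ℝ) ^ (Fintype.card V - #S.1 - 1) * H #S.1 =
      (Fintype.card V : ℝ) ^ (Fintype.card V - 1) *
        ∑ k ∈ Icc 1 K, fringeDensity k (Fintype.card V) * H k := by
  have hsub : Icc 1 K ⊆ range (Fintype.card V) := fun k hk =>
    mem_range.2 ((mem_Icc.1 hk).2.trans_lt hK)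
  have hcard : (Fintype.card V : ℝ) ^ (Fintype.card V - 1) ≠ 0 :=
    pow_ne_zero _ (Nat.cast_ne_zero.2 (Nat.ne_zero_of_lt hK))
  rw [sum_notMem_apply_card r fun k =>
    ((Fintype.card V - k : ℕ) : ℝ) ^ (Fintype.card V - k - 1) * H k, ← sum_subset hsub, mul_sum]
  · refine sum_congr rfl fun k _ => ?_
    rw [fringeDensity]
    field_simp
  · intro k _ hk
    have hHk : H k = 0 := by
      rcases Nat.eq_zero_or_pos k with rfl | hpos
      · exact hzero
      · exact hlarge k (not_le.1 fun hkK => hk (mem_Icc.2 ⟨hpos, hkK⟩))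
    rw [hHk, mul_zero, mul_zero]

namespace IsToll

theorem rootedTreeSum_eq_zero (hτ : IsToll K τ) {k : ℕ} (hk : K < k) :
    rootedTreeSum (τ k) k = 0 :=
  sum_eq_zero fun _ _ => sum_eq_zero fun _ _ => hτ.eq_zero_of_lt hk _

theorem rootedTreeSum_abs_eq_zero (hτ : IsToll K τ) {k : ℕ} (hk : K < k) :
    rootedTreeSum (fun g => |τ k g|) k = 0 :=
  sum_eq_zero fun _ _ => sum_eq_zero fun _ _ => abs_eq_zero.2 (hτ.eq_zero_of_lt hk _)

theorem sum_additiveFunctional (hτ : IsToll K τ) (r : V) (hK : K < Fintype.card V) :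
    ∑ p ∈ rootedForests {r}, additiveFunctional τ p =
      (Fintype.card V : ℝ) ^ (Fintype.card V - 1) * meanToll K τ (Fintype.card V) := by
  rw [sum_congr rfl fun p hp => (mem_rootedForests.1 hp).additiveFunctional_eq_sum_erase hτ hK,
    sum_fringe, meanToll, ← sum_notMem_eq_sum_fringeDensity r hK
      (H := fun k => rootedTreeSum (τ k) k) (rootedTreeSum_zero _)
      fun k hk => hτ.rootedTreeSum_eq_zero hk]
  refine sum_congr rfl fun S _ => ?_
  have hgraft (v : S.1) : ∀ q ∈ rootedForests {v},
      ∑ p ∈ rootedForests {(⟨r, S.2⟩ : {x // x ∉ S.1})}, ∑ b,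
        τ #(descendants (graftOn S.1 q p v b) v) (fringeValue (graftOn S.1 q p v b) v) =
      ((Fintype.card V - #S.1 : ℕ) : ℝ) ^ (Fintype.card V - #S.1 - 1) *
        τ #S.1 (fringeValue q v) := by
    intro q hq
    rw [mem_rootedForests] at hq
    simp only [hq.descendants_graftOn, hq.fringeValue_graftOn, sum_const, card_univ, nsmul_eq_mul]
    rw [card_notMem, ← mul_assoc, card_rootedForests_compl]
  rw [sum_congr rfl fun v _ => sum_congr rfl (hgraft v)]
  simp only [← mul_sum]
  rw [sum_fringeValue_eq_rootedTreeSum, Fintype.card_coe]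

theorem sum_toll_mul_additiveFunctional_graftOn_le (hτ : IsToll K τ) {S : Finset V} {v : S}
    {q : S → S} (hq : IsRootedForest {v} q) (r : {x // x ∉ S}) (hK : 2 * K < Fintype.card V) :
    ∑ p ∈ rootedForests {r}, ∑ b, τ #(descendants (graftOn S q p v b) v)
        (fringeValue (graftOn S q p v b) v) * additiveFunctional τ (graftOn S q p v b) ≤
      ((Fintype.card V - #S : ℕ) : ℝ) ^ (Fintype.card V - #S - 1) *
        (τ #S (fringeValue q v) *
            (((Fintype.card V - #S : ℕ) : ℝ) * meanToll K τ (Fintype.card V - #S)) +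
          |τ #S (fringeValue q v)| * (#S + 2 * K)) := by
  simp only [hq.descendants_graftOn, hq.fringeValue_graftOn, ← mul_sum]
  set t := τ #S (fringeValue q v) with ht
  rcases lt_or_ge K #S with hS | hS
  · simp [ht, hτ.eq_zero_of_lt hS]
  set m := Fintype.card V - #S with hm
  have hsum : ∑ p ∈ rootedForests {r}, additiveFunctional τ p =
      (m : ℝ) ^ (m - 1) * meanToll K τ m := by
    rw [hτ.sum_additiveFunctional r (by rw [card_notMem]; lia), card_notMem]
  have hgraft (p : {x // x ∉ S} → {x // x ∉ S}) :
      t * ∑ b, additiveFunctional τ (graftOn S q p v b) ≤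
        t * m * additiveFunctional τ p + m * (|t| * (#S + 2 * K)) := by
    have h := hτ.abs_sum_additiveFunctional_graft_sub_le hq p
    rw [card_notMem, Fintype.card_coe, ← hm] at h
    simp only [graftOn, additiveFunctional_conj]
    have hmul := (le_abs_self _).trans_eq (abs_mul t _) |>.trans
      (mul_le_mul_of_nonneg_left h (abs_nonneg t))
    linarith
  calc t * ∑ p ∈ rootedForests {r}, ∑ b, additiveFunctional τ (graftOn S q p v b)
      ≤ ∑ p ∈ rootedForests {r}, (t * m * additiveFunctional τ p + m * (|t| * (#S + 2 * K))) := by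
        rw [mul_sum]
        exact sum_le_sum fun p _ => hgraft p
    _ = t * m * (m ^ (m - 1) * meanToll K τ m) +
          #(rootedForests {r}) * m * (|t| * (#S + 2 * K)) := by
        rw [sum_add_distrib, ← mul_sum, hsum, sum_const, nsmul_eq_mul, ← mul_assoc _ (m : ℝ)]
    _ = _ := by
        rw [card_rootedForests_compl S r, ← hm]
        ring

theorem sum_additiveFunctional_sq_le (hτ : IsToll K τ) (r : V) (hK : 2 * K < Fintype.card V) :
    ∑ p ∈ rootedForests {r}, additiveFunctional τ p ^ 2 ≤
      (Fintype.card V : ℝ) ^ (Fintype.card V - 1) * secondMomentBound K τ (Fintype.card V) := by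
  have hsq : ∀ p ∈ rootedForests {r}, additiveFunctional τ p ^ 2 = ∑ v ∈ univ.erase r,
      τ #(descendants p v) (fringeValue p v) * additiveFunctional τ p := by
    intro p hp
    rw [← sum_mul, ← (mem_rootedForests.1 hp).additiveFunctional_eq_sum_erase hτ (by lia), sq]
  rw [sum_congr rfl hsq, sum_fringe, secondMomentBound,
    ← sum_notMem_eq_sum_fringeDensity r (by lia)
    (by simp only [rootedTreeSum_zero, zero_mul, add_zero])
    (fun k hk => by
      rw [hτ.rootedTreeSum_eq_zero hk, hτ.rootedTreeSum_abs_eq_zero hk, zero_mul, zero_mul,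
        add_zero])]
  refine sum_le_sum fun S _ => ?_
  refine (sum_le_sum fun v _ => sum_le_sum fun q hq =>
    hτ.sum_toll_mul_additiveFunctional_graftOn_le (mem_rootedForests.1 hq) ⟨r, S.2⟩ hK).trans_eq ?_
  simp only [← mul_sum, sum_add_distrib, ← sum_mul]
  rw [sum_fringeValue_eq_rootedTreeSum (τ #S.1),
    sum_fringeValue_eq_rootedTreeSum fun g => |τ #S.1 g|, Fintype.card_coe]

end IsToll

end Moments

section Concentration

-- `fringeDensity k (N + 1) * k ^ k` is the probability that a binomial variable with `N` trials and
-- success probability `k / (N + 1)` equals `k`, so this is the Poisson limit theorem.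
theorem tendsto_fringeDensity (k : ℕ) :
    Tendsto (fringeDensity k) atTop (𝓝 (Real.exp (-k) / k.factorial)) := by
  have hmean : Tendsto (fun N : ℕ => (N : ℝ) * (k / (N + 1))) atTop (𝓝 k) := by
    have h := (tendsto_natCast_div_add_atTop (𝕜 := ℝ) 1).const_mul (k : ℝ)
    rw [mul_one] at h
    exact h.congr fun N => mul_div_left_comm _ _ _
  have hkk : (k : ℝ) ^ k ≠ 0 := by exact_mod_cast Nat.pow_self_pos.ne'
  have hpoisson := (ProbabilityTheory.tendsto_choose_mul_pow_of_tendsto_mul_atTop k hmean).div_const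
    ((k : ℝ) ^ k)
  rw [mul_div_right_comm, mul_div_cancel_right₀ _ hkk] at hpoisson
  rw [← tendsto_add_atTop_iff_nat 1]
  refine hpoisson.congr' ?_
  filter_upwards [eventually_ge_atTop k] with N hN
  obtain ⟨m, rfl⟩ := Nat.exists_eq_add_of_le hN
  have hsub : k + m + 1 - k = m + 1 := by lia
  have hcompl : 1 - (k : ℝ) / ((k + m : ℕ) + 1) = (m + 1) / ((k + m : ℕ) + 1) := by
    push_cast
    field_simp
    ring
  rw [fringeDensity, hsub, hcompl, div_pow, div_pow, Nat.add_sub_cancel_left, Nat.add_sub_cancel,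
    Nat.add_sub_cancel]
  push_cast
  field_simp
  ring

/-- The limit of the mean per vertex of the additive functional with toll `τ`. -/
noncomputable def limitToll (K : ℕ) (τ : ℕ → ℕ → ℝ) : ℝ :=
  ∑ k ∈ Icc 1 K, Real.exp (-k) / k.factorial * rootedTreeSum (τ k) k

variable {K : ℕ} {τ : ℕ → ℕ → ℝ}

theorem tendsto_meanToll (K : ℕ) (τ : ℕ → ℕ → ℝ) :
    Tendsto (meanToll K τ) atTop (𝓝 (limitToll K τ)) :=
  tendsto_finsetSum _ fun k _ => (tendsto_fringeDensity k).mul_const _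

theorem tendsto_secondMomentBound_div (K : ℕ) (τ : ℕ → ℕ → ℝ) :
    Tendsto (fun n : ℕ => secondMomentBound K τ n / n) atTop (𝓝 (limitToll K τ ^ 2)) := by
  let c (k : ℕ) : ℝ := rootedTreeSum (fun g => |τ k g|) k * (k + 2 * K)
  have hratio (k : ℕ) : Tendsto (fun n : ℕ => ((n - k : ℕ) : ℝ) / n) atTop (𝓝 1) := by
    rw [← tendsto_add_atTop_iff_nat k]
    simpa only [Nat.add_sub_cancel, Nat.cast_add] using
      tendsto_natCast_div_add_atTop (𝕜 := ℝ) (k : ℝ)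
  have hterm (k : ℕ) : Tendsto (fun n : ℕ => fringeDensity k n *
      (rootedTreeSum (τ k) k * (((n - k : ℕ) : ℝ) / n * meanToll K τ (n - k)) + c k / n)) atTop
      (𝓝 (Real.exp (-k) / k.factorial * (rootedTreeSum (τ k) k * (1 * limitToll K τ) + 0))) := by
    have hmean := (tendsto_meanToll K τ).comp (tendsto_sub_atTop_nat k)
    exact (tendsto_fringeDensity k).mul
      ((((hratio k).mul hmean).const_mul _).add (tendsto_const_div_atTop_nhds_zero_nat _))
  have hlim : limitToll K τ ^ 2 = ∑ k ∈ Icc 1 K,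
      Real.exp (-k) / k.factorial * (rootedTreeSum (τ k) k * (1 * limitToll K τ) + 0) := by
    simp only [one_mul, add_zero, ← mul_assoc, ← sum_mul]
    exact sq _
  rw [hlim]
  refine (tendsto_finsetSum (Icc 1 K) fun k _ => hterm k).congr fun n => ?_
  rw [secondMomentBound, sum_div]
  exact sum_congr rfl fun k _ => by ring

theorem card_filter_add_lt_mul_sq_le {ι : Type*} (s : Finset ι) (X : ι → ℝ) (c : ℝ) {δ : ℝ}
    (hδ : 0 ≤ δ) : #{i ∈ s | c + δ < X i} * δ ^ 2 ≤
      ∑ i ∈ s, X i ^ 2 - 2 * c * ∑ i ∈ s, X i + c ^ 2 * #s := by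
  calc #{i ∈ s | c + δ < X i} * δ ^ 2 = ∑ i ∈ s with c + δ < X i, δ ^ 2 := by
        rw [sum_const, nsmul_eq_mul]
    _ ≤ ∑ i ∈ s with c + δ < X i, (X i - c) ^ 2 := sum_le_sum fun i hi =>
        pow_le_pow_left₀ hδ (le_sub_iff_add_le'.2 (mem_filter.1 hi).2.le) 2
    _ ≤ ∑ i ∈ s, (X i - c) ^ 2 :=
        sum_le_sum_of_subset_of_nonneg (filter_subset _ _) fun _ _ _ => sq_nonneg _
    _ = ∑ i ∈ s, X i ^ 2 - 2 * c * ∑ i ∈ s, X i + c ^ 2 * #s := by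
        rw [mul_sum, ← sum_sub_distrib, mul_comm (c ^ 2), ← nsmul_eq_mul, ← sum_const,
          ← sum_add_distrib]
        exact sum_congr rfl fun i _ => by ring

theorem IsToll.card_filter_lt_div_card_le {V : Type*} [Fintype V] (hτ : IsToll K τ) (r : V)
    (hK : 2 * K < Fintype.card V) (c : ℝ) {δ : ℝ} (hδ : 0 < δ) :
    (#{p ∈ rootedForests {r} | (c + δ) * Fintype.card V < additiveFunctional τ p} : ℝ) /
        #(rootedForests {r}) ≤
      (secondMomentBound K τ (Fintype.card V) / Fintype.card V -
        2 * c * meanToll K τ (Fintype.card V) + c ^ 2) / δ ^ 2 := by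
  have hcheb := card_filter_add_lt_mul_sq_le (rootedForests {r}) (additiveFunctional τ)
    (c * Fintype.card V) (mul_nonneg hδ.le (Nat.cast_nonneg (Fintype.card V)))
  rw [← add_mul, hτ.sum_additiveFunctional r (by lia)] at hcheb
  have hsq := hτ.sum_additiveFunctional_sq_le r hK
  have hcayley : (#(rootedForests {r}) : ℝ) * Fintype.card V =
      (Fintype.card V : ℝ) ^ (Fintype.card V - 1) := by
    exact_mod_cast card_rootedForests_singleton_mul_card r
  rw [← hcayley] at hcheb hsq
  have hn : (0 : ℝ) < Fintype.card V := by exact_mod_cast (by lia : 0 < Fintype.card V)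
  have hN : (0 : ℝ) < #(rootedForests {r}) :=
    pos_of_mul_pos_left (hcayley ▸ pow_pos hn _) hn.le
  rw [div_le_div_iff₀ hN (by positivity)]
  refine le_of_mul_le_mul_right ?_ (pow_pos hn 2)
  rw [mul_assoc, ← mul_pow]
  refine (hcheb.trans (add_le_add_left (sub_le_sub_right hsq _) _)).trans_eq ?_
  field_simp

theorem IsToll.tendsto_card_filter_lt_div_card (hτ : IsToll K τ) {δ : ℝ} (hδ : 0 < δ) :
    Tendsto (fun n : ℕ => (#{p ∈ rootedForests {(0 : Fin (n + 1))} |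
      (limitToll K τ + δ) * (n + 1 : ℕ) < additiveFunctional τ p} : ℝ) /
        #(rootedForests {(0 : Fin (n + 1))})) atTop (𝓝 0) := by
  have hbound := ((tendsto_secondMomentBound_div K τ).sub
    ((tendsto_meanToll K τ).const_mul (2 * limitToll K τ))).add_const (limitToll K τ ^ 2)
    |>.div_const (δ ^ 2)
  have hzero : (limitToll K τ ^ 2 - 2 * limitToll K τ * limitToll K τ + limitToll K τ ^ 2) / δ ^ 2 =
      0 := by ring
  rw [hzero, ← tendsto_add_atTop_iff_nat 1] at hbound
  refine squeeze_zero' (.of_forall fun n => by positivity) ?_ hbound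
  filter_upwards [eventually_ge_atTop (2 * K)] with n hn
  have h := hτ.card_filter_lt_div_card_le (0 : Fin (n + 1)) (by rw [Fintype.card_fin]; lia)
    (limitToll K τ) hδ
  rwa [Fintype.card_fin] at h

end Concentration

section ParentGraph

variable {V : Type*} {p q : V → V} {R : Finset V} {r v x y : V} {S : Set V}

/-- The graph that joins every vertex to its parent. -/
def parentGraph (p : V → V) : SimpleGraph V := SimpleGraph.fromRel fun x y => p x = y

theorem parentGraph_adj : (parentGraph p).Adj x y ↔ x ≠ y ∧ (p x = y ∨ p y = x) :=
  SimpleGraph.fromRel_adj _ x y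

theorem connected_induce_of_mem_rootedSubtrees (hS : S ∈ rootedSubtrees p v) (hv : v ∈ S) :
    ((parentGraph p).induce S).Connected := by
  refine (SimpleGraph.connected_iff_exists_forall_reachable _).2 ⟨⟨v, hv⟩, fun ⟨x, hx⟩ => ?_⟩
  have hxv := (hS x hx).1
  induction hxv using Relation.ReflTransGen.head_induction_on with
  | refl => rfl
  | @head x _ hxy _ ih =>
    subst hxy
    obtain rfl | hne := eq_or_ne x v
    · rfl
    have hpx : p x ∈ S := (hS x hx).2 hne
    refine (ih hpx).trans ?_
    obtain hfix | hfix := eq_or_ne (p x) x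
    · rw [show (⟨p x, hpx⟩ : S) = ⟨x, hx⟩ from Subtype.ext hfix]
    · exact SimpleGraph.Adj.reachable (parentGraph_adj.2 ⟨hfix, .inr rfl⟩)

theorem isDescendant_of_connected_induce (hS : ((parentGraph p).induce S).Connected) (hx : x ∈ S)
    (hpx : p x ∉ S) (hy : y ∈ S) : IsDescendant p y x := by
  have hreach := (SimpleGraph.reachable_iff_reflTransGen _ _).1 (hS.preconnected ⟨x, hx⟩ ⟨y, hy⟩)
  suffices ∀ z : S, Relation.ReflTransGen ((parentGraph p).induce S).Adj ⟨x, hx⟩ z →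
      IsDescendant p z x from this _ hreach
  intro z hz
  induction hz with
  | refl => exact .refl p x
  | @tail a b _ hab ih =>
    obtain ⟨-, (hpa : p a = b) | (hpb : p b = a)⟩ := parentGraph_adj.1 hab
    · exact hpa ▸ ih.parent fun hax => hpx (hax ▸ hpa ▸ b.2)
    · exact .of_parent (hpb ▸ ih)

namespace IsRootedForest

theorem mem_rootedSubtrees_of_connected_induce (h : IsRootedForest R p)
    (hS : ((parentGraph p).induce S).Connected) (hv : v ∈ S) (hdesc : ∀ x ∈ S, IsDescendant p x v) :
    S ∈ rootedSubtrees p v := by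
  refine fun x hx => ⟨hdesc x hx, fun hne => ?_⟩
  by_contra hpx
  exact hne (h.antisymm (hdesc x hx) (isDescendant_of_connected_induce hS hx hpx hv))

theorem exists_mem_rootedSubtrees (h : IsRootedForest {r} p)
    (hS : ((parentGraph p).induce S).Connected) : ∃ v, S ∈ rootedSubtrees p v := by
  obtain ⟨x, hx⟩ := hS.nonempty
  have hxr := h.isDescendant_root x
  induction hxr using Relation.ReflTransGen.head_induction_on with
  | refl =>
    exact ⟨r, h.mem_rootedSubtrees_of_connected_induce hS hx fun y _ => h.isDescendant_root y⟩
  | @head x _ hxy _ ih =>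
    subst hxy
    by_cases hpx : p x ∈ S
    · exact ih hpx
    · exact ⟨x, h.mem_rootedSubtrees_of_connected_induce hS hx fun y hy =>
        isDescendant_of_connected_induce hS hx hpx hy⟩

theorem gval_parentGraph {k : ℕ} {v : Fin k} {p : Fin k → Fin k} (h : IsRootedForest {v} p) :
    gval (parentGraph p) v = fringeValue p v := by
  rw [fringeValue_eq_one_add, gval, ← Set.coe_ofPred, Nat.card_coe_set_eq]
  congr 2
  ext S
  exact and_congr_right fun hv =>
    ⟨fun hS => h.mem_rootedSubtrees_of_connected_induce hS hv fun x _ => h.isDescendant_root x,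
      fun hS => connected_induce_of_mem_rootedSubtrees hS hv⟩

theorem subtreeCount_parentGraph_le {n : ℕ} {r : Fin n} {p : Fin n → Fin n}
    (h : IsRootedForest {r} p) : subtreeCount (parentGraph p) ≤ ∑ v, fringeValue p v := by
  have hsub : {S | ((parentGraph p).induce S).Connected} ⊆ ⋃ v, rootedSubtrees p v :=
    fun S hS => Set.mem_iUnion.2 (h.exists_mem_rootedSubtrees hS)
  exact (Set.ncard_le_ncard hsub (Set.toFinite _)).trans (Set.ncard_iUnion_le_of_fintype _)

theorem parentGraph_connected (h : IsRootedForest {r} p) : (parentGraph p).Connected := by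
  refine (parentGraph p).induceUnivIso.connected_iff.1
    (connected_induce_of_mem_rootedSubtrees (v := r) ?_ (Set.mem_univ r))
  exact fun x _ => ⟨h.isDescendant_root x, fun _ => Set.mem_univ _⟩

theorem eq_of_parentGraph_eq (hp : IsRootedForest R p) (hq : IsRootedForest R q)
    (h : parentGraph p = parentGraph q) : p = q := by
  funext x
  obtain ⟨r, hr, hxr⟩ := hp.2 x
  induction hxr using Relation.ReflTransGen.head_induction_on with
  | refl => exact (hp.1 r hr).trans (hq.1 r hr).symm
  | @head x _ hxy _ ih =>
    subst hxy
    obtain hfix | hfix := eq_or_ne (p x) x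
    · exact hfix.trans (hq.1 x (hp.mem_of_fixed hfix)).symm
    have hadj : (parentGraph q).Adj x (p x) := h ▸ parentGraph_adj.2 ⟨hfix.symm, .inl rfl⟩
    rcases (parentGraph_adj.1 hadj).2 with hqx | hqpx
    · exact hqx.symm
    · have hcycle : p (p x) = x := ih.trans hqpx
      have hback : IsDescendant p (p x) x := .of_parent (hcycle.symm ▸ .refl p x)
      exact (hfix (hp.antisymm hback (isDescendant_parent p x))).elim

theorem parentGraph_isTree [Finite V] (h : IsRootedForest {r} p) : (parentGraph p).IsTree := by
  have hsub : (parentGraph p).edgeSet ⊆ (fun x => s(x, p x)) '' {r}ᶜ := by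
    rintro ⟨x, y⟩ hxy
    have hroot : p r = r := h.1 r (mem_singleton_self r)
    obtain ⟨hne, (rfl : p x = y) | (rfl : p y = x)⟩ := parentGraph_adj.1 hxy
    · exact ⟨x, fun hx => hne (hx ▸ hroot.symm), rfl⟩
    · exact ⟨y, fun hy => hne (hy ▸ hroot), Sym2.eq_swap⟩
  have hcard : Nat.card (parentGraph p).edgeSet ≤ Nat.card V - 1 := by
    rw [← Set.ncard_singleton r, ← Set.ncard_compl]
    exact (Set.ncard_le_ncard hsub (Set.toFinite _)).trans (Set.ncard_image_le (Set.toFinite _))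
  have hV : 0 < Nat.card V := Nat.card_pos_iff.2 ⟨⟨r⟩, inferInstance⟩
  have hle := h.parentGraph_connected.card_vert_le_card_edgeSet_add_one
  exact SimpleGraph.isTree_iff_connected_and_card.2 ⟨h.parentGraph_connected, by lia⟩

end IsRootedForest

theorem exists_adj_dist_lt {G : SimpleGraph V} (hG : G.Connected) (hx : x ≠ r) :
    ∃ y, G.Adj x y ∧ G.dist y r < G.dist x r := by
  obtain ⟨w, hw⟩ := hG.exists_walk_length_eq_dist x r
  cases w with
  | nil => exact (hx rfl).elim
  | @cons _ y _ hxy w =>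
    rw [SimpleGraph.Walk.length_cons] at hw
    exact ⟨y, hxy, by have := SimpleGraph.dist_le w; lia⟩

theorem exists_isRootedForest_parentGraph_le {G : SimpleGraph V} (hG : G.Connected) (r : V) :
    ∃ p, IsRootedForest {r} p ∧ parentGraph p ≤ G := by
  have hcloser (x : V) : ∃ y, (x = r → y = r) ∧ (x ≠ r → G.Adj x y ∧ G.dist y r < G.dist x r) := by
    obtain rfl | hx := eq_or_ne x r
    · exact ⟨x, fun _ => rfl, fun h => (h rfl).elim⟩
    · obtain ⟨y, hy⟩ := exists_adj_dist_lt hG hx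
      exact ⟨y, fun h => (hx h).elim, fun _ => hy⟩
  choose p hroot hcloser using hcloser
  have hdesc (x : V) : IsDescendant p x r := by
    induction hn : G.dist x r using Nat.strong_induction_on generalizing x with
    | _ n ih =>
      obtain rfl | hx := eq_or_ne x r
      · exact .refl p x
      · exact .of_parent (ih _ (hn ▸ (hcloser x hx).2) (p x) rfl)
  refine ⟨p, ⟨fun x hx => ?_, fun x => ⟨r, mem_singleton_self r, hdesc x⟩⟩, ?_⟩
  · rw [mem_singleton.1 hx, hroot r rfl]
  · have hadj {x : V} (hne : x ≠ p x) : G.Adj x (p x) :=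
      (hcloser x fun hx => hne (hx.trans (hroot x hx).symm)).1
    intro x y hxy
    obtain ⟨hne, rfl | rfl⟩ := parentGraph_adj.1 hxy
    · exact hadj hne
    · exact (hadj hne.symm).symm

theorem isTree_iff_exists_parentGraph_eq [Finite V] {G : SimpleGraph V} (r : V) :
    G.IsTree ↔ ∃ p, IsRootedForest {r} p ∧ parentGraph p = G := by
  constructor
  · intro hG
    obtain ⟨p, hp, hle⟩ := exists_isRootedForest_parentGraph_le hG.connected r
    exact ⟨p, hp, le_antisymm hle
      ((SimpleGraph.isTree_iff_minimal_connected.1 hG).2 hp.parentGraph_connected hle)⟩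
  · rintro ⟨p, hp, rfl⟩
    exact hp.parentGraph_isTree

variable [Fintype V]

theorem injOn_parentGraph (R : Finset V) :
    Set.InjOn parentGraph (rootedForests R : Set (V → V)) := fun _ hp _ hq =>
  (mem_rootedForests.1 hp).eq_of_parentGraph_eq (mem_rootedForests.1 hq)

theorem filter_isTree_eq_image_parentGraph [Fintype (SimpleGraph V)] [DecidableEq (SimpleGraph V)]
    [DecidablePred fun G : SimpleGraph V => G.IsTree] (r : V) :
    ({G | G.IsTree} : Finset (SimpleGraph V)) = (rootedForests {r}).image parentGraph := by
  ext G
  simp only [mem_filter_univ, mem_image, mem_rootedForests]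
  exact isTree_iff_exists_parentGraph_eq r

theorem ncard_setOf_isTree_and (r : V) (P : SimpleGraph V → Prop) :
    {G | G.IsTree ∧ P G}.ncard = #{p ∈ rootedForests {r} | P (parentGraph p)} := by
  have himage : {G | G.IsTree ∧ P G} =
      parentGraph '' ({p ∈ rootedForests {r} | P (parentGraph p)} : Finset (V → V)) := by
    ext G
    simp only [Set.mem_ofPred_eq, isTree_iff_exists_parentGraph_eq r, coe_filter, Set.mem_image,
      mem_rootedForests]
    constructor
    · rintro ⟨⟨p, hp, rfl⟩, hP⟩
      exact ⟨p, ⟨hp, hP⟩, rfl⟩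
    · rintro ⟨p, ⟨hp, hP⟩, rfl⟩
      exact ⟨⟨p, hp, rfl⟩, hP⟩
  rw [himage, Set.InjOn.ncard_image, Set.ncard_coe_finset]
  exact (injOn_parentGraph {r}).mono (coe_subset.2 (filter_subset _ _))

theorem one_sub_treeProb {n : ℕ} (r : Fin n) (P : SimpleGraph (Fin n) → Prop) :
    1 - treeProb n P =
      (#{p ∈ rootedForests {r} | ¬ P (parentGraph p)} : ℝ) / #(rootedForests {r}) := by
  have hall : Nat.card {G : SimpleGraph (Fin n) // G.IsTree} = #(rootedForests {r}) := by
    have h := ncard_setOf_isTree_and r fun _ => True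
    simp only [and_true, filter_true] at h
    exact h
  have hP : Nat.card {G : SimpleGraph (Fin n) // G.IsTree ∧ P G} =
      #{p ∈ rootedForests {r} | P (parentGraph p)} := ncard_setOf_isTree_and r P
  have hpos : (#(rootedForests {r}) : ℝ) ≠ 0 := by
    have h := card_rootedForests_singleton_mul_card r
    rw [Fintype.card_fin] at h
    exact_mod_cast left_ne_zero_of_mul (h ▸ pow_ne_zero _ r.pos.ne')
  have hsum := card_filter_add_card_filter_not (s := rootedForests {r}) fun p => P (parentGraph p)
  rw [treeProb, hall, hP, one_sub_div hpos, ← hsum]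
  push_cast
  rw [add_sub_cancel_left]

end ParentGraph

section Constant

/-- The logarithm of the ratio between `g / (g - 1)`, the factor by which a vertex with fringe value
`g` multiplies the number of subtrees, and the crude bound `2` for that factor. It is set to `0` for
`g < 2`, values that no fringe subtree takes. -/
noncomputable def logGain (g : ℕ) : ℝ :=
  if 2 ≤ g then Real.log g - Real.log (g - 1) - Real.log 2 else 0

theorem neg_log_two_le_logGain (g : ℕ) : -Real.log 2 ≤ logGain g := by
  rw [logGain]
  split_ifs with hg
  · have hg' : (2 : ℝ) ≤ g := by exact_mod_cast hg
    have := Real.log_le_log (x := (g : ℝ) - 1) (by linarith) (sub_le_self (g : ℝ) zero_le_one)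
    linarith
  · exact neg_nonpos.2 (Real.log_nonneg one_le_two)

theorem logGain_nonpos (g : ℕ) : logGain g ≤ 0 := by
  rw [logGain]
  split_ifs with hg
  · have hg' : (2 : ℝ) ≤ g := by exact_mod_cast hg
    have := Real.log_le_log (x := (g : ℝ)) (y := 2 * (g - 1)) (by linarith) (by linarith)
    rw [Real.log_mul two_ne_zero (by linarith)] at this
    linarith
  · exact le_rfl

theorem two_mul_exp_logGain_mul {g : ℕ} (hg : 2 ≤ g) : 2 * Real.exp (logGain g) * (g - 1) = g := by
  have hg' : (2 : ℝ) ≤ g := by exact_mod_cast hg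
  have hne : (g : ℝ) - 1 ≠ 0 := by linarith
  rw [logGain, if_pos hg, Real.exp_sub, Real.exp_sub, Real.exp_log (by linarith),
    Real.exp_log (by linarith), Real.exp_log two_pos]
  field_simp

/-- The toll that charges `logGain` to the fringe subtrees with at most `K` vertices. -/
noncomputable def gainToll (K s g : ℕ) : ℝ := if s ≤ K then logGain g else 0

theorem isToll_gainToll (K : ℕ) : IsToll K (gainToll K) where
  abs_le_one s g := by
    have hlog : Real.log 2 ≤ 1 := by linarith [Real.log_le_sub_one_of_pos two_pos]
    rw [gainToll]
    split_ifs
    · exact abs_le.2 ⟨by linarith [neg_log_two_le_logGain g], (logGain_nonpos g).trans zero_le_one⟩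
    · rw [abs_zero]
      exact zero_le_one
  eq_zero_of_lt hs g := if_neg hs.not_ge

theorem one_le_two_mul_exp_gainToll (K s g : ℕ) : 1 ≤ 2 * Real.exp (gainToll K s g) := by
  have hle : -Real.log 2 ≤ gainToll K s g := by
    rw [gainToll]
    split_ifs
    · exact neg_log_two_le_logGain g
    · exact neg_nonpos.2 (Real.log_nonneg one_le_two)
  calc (1 : ℝ) = 2 * Real.exp (-Real.log 2) := by
        rw [Real.exp_neg, Real.exp_log two_pos, mul_inv_cancel₀ two_ne_zero]
    _ ≤ 2 * Real.exp (gainToll K s g) := by gcongr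

theorem le_two_mul_exp_gainToll_mul (K s : ℕ) {g : ℕ} (hg : 2 ≤ g) :
    (g : ℝ) ≤ 2 * Real.exp (gainToll K s g) * (g - 1) := by
  have hg' : (2 : ℝ) ≤ g := by exact_mod_cast hg
  rw [gainToll]
  split_ifs
  · exact (two_mul_exp_logGain_mul hg).ge
  · rw [Real.exp_zero]
    linarith

theorem IsRootedForest.fringeValue_le_exp {V : Type*} [Fintype V] {R : Finset V} {p : V → V}
    (h : IsRootedForest R p) (K : ℕ) (v : V) : (fringeValue p v : ℝ) ≤
      Real.exp (Fintype.card V * Real.log 2 + additiveFunctional (gainToll K) p) := by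
  calc (fringeValue p v : ℝ)
      ≤ ∏ x ∈ descendants p v, 2 * Real.exp (gainToll K #(descendants p x) (fringeValue p x)) :=
        h.fringeValue_le_prod (fun x => by positivity)
          (fun x => le_two_mul_exp_gainToll_mul K _ (two_le_fringeValue p x)) v
    _ ≤ ∏ x, 2 * Real.exp (gainToll K #(descendants p x) (fringeValue p x)) :=
        prod_le_prod_of_subset_of_one_le (subset_univ _) (fun x _ => by positivity)
          fun x _ _ => one_le_two_mul_exp_gainToll K _ _
    _ = Real.exp (Fintype.card V * Real.log 2 + additiveFunctional (gainToll K) p) := by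
        rw [prod_mul_distrib, prod_const, ← Real.exp_sum, card_univ, Real.exp_add,
          Real.exp_nat_mul, Real.exp_log two_pos, additiveFunctional]

theorem IsRootedForest.subtreeCount_parentGraph_le_exp {n : ℕ} {r : Fin n} {p : Fin n → Fin n}
    (h : IsRootedForest {r} p) (K : ℕ) : (subtreeCount (parentGraph p) : ℝ) ≤
      n * Real.exp (n * Real.log 2 + additiveFunctional (gainToll K) p) := by
  calc (subtreeCount (parentGraph p) : ℝ)
      ≤ ∑ v, (fringeValue p v : ℝ) := by exact_mod_cast h.subtreeCount_parentGraph_le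
    _ ≤ ∑ _ : Fin n, Real.exp (n * Real.log 2 + additiveFunctional (gainToll K) p) :=
        sum_le_sum fun v _ => by simpa only [Fintype.card_fin] using h.fringeValue_le_exp K v
    _ = _ := by rw [sum_const, card_univ, Fintype.card_fin, nsmul_eq_mul]

theorem rootedTreeSum_logGain {k : ℕ} (hk : k ≠ 0) : rootedTreeSum logGain k =
    rootedTreeSum (fun g => Real.log g) k - rootedTreeSum (fun g => Real.log (g - 1)) k -
      k ^ (k - 1) * Real.log 2 := by
  rw [← rootedTreeSum_const _ hk]
  simp only [rootedTreeSum, ← sum_sub_distrib]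
  exact sum_congr rfl fun v _ => sum_congr rfl fun q _ => if_pos (two_le_fringeValue q v)

theorem prod_gval_rpow_eq_exp (k : ℕ) (f : ℝ) :
    (∏ T : SimpleGraph (Fin k), ∏ v : Fin k, if T.IsTree then (gval T v : ℝ) ^ f else 1) =
      Real.exp (f * rootedTreeSum (fun g => Real.log g) k) := by
  rw [Finset.prod_comm, rootedTreeSum, mul_sum, Real.exp_sum]
  refine prod_congr rfl fun v _ => ?_
  rw [← prod_filter, filter_isTree_eq_image_parentGraph v, prod_image (injOn_parentGraph {v}),
    mul_sum, Real.exp_sum]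
  refine prod_congr rfl fun p hp => ?_
  have hpos : (0 : ℝ) < fringeValue p v :=
    Nat.cast_pos.2 (two_pos.trans_le (two_le_fringeValue p v))
  rw [(mem_rootedForests.1 hp).gval_parentGraph, Real.rpow_def_of_pos hpos, mul_comm]

theorem sum_fK_mul_rootedTreeSum_log (K : ℕ) :
    ∑ k ∈ Icc 1 K, fK K k * rootedTreeSum (fun g => Real.log g) k =
      ∑ k ∈ Icc 1 K, Real.exp (-k) / k.factorial *
        (rootedTreeSum (fun g => Real.log g) k - rootedTreeSum (fun g => Real.log (g - 1)) k) := by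
  have hrec (l : ℕ) (hl : l ∈ Icc 1 K) :
      Real.exp (-l) / l.factorial * rootedTreeSum (fun g => Real.log (g - 1)) l =
        ∑ k ∈ Ico 1 l, ((l - k : ℕ) : ℝ) ^ (l - k - 1) * l.choose (l - k) * Real.exp (-l) /
          l.factorial * rootedTreeSum (fun g => Real.log g) k := by
    rw [rootedTreeSum_log_sub_one, range_eq_Ico, sum_eq_sum_Ico_succ_bot (mem_Icc.1 hl).1,
      rootedTreeSum_zero, mul_zero, zero_add, mul_sum]
    exact sum_congr rfl fun k _ => by ring
  simp only [fK, sub_mul, mul_sub, sum_sub_distrib]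
  rw [sum_congr rfl hrec]
  simp only [sum_mul]
  congr 1
  refine sum_comm' fun k l => ?_
  simp only [mem_Icc, mem_Ico]
  lia

theorem limitToll_gainToll (K : ℕ) : limitToll K (gainToll K) =
    ∑ k ∈ Icc 1 K, fK K k * rootedTreeSum (fun g => Real.log g) k + (hfun K - 1) * Real.log 2 := by
  rw [sum_fK_mul_rootedTreeSum_log, limitToll, hfun, sub_sub_cancel_left, neg_mul, sum_mul,
    ← sub_eq_add_neg, ← sum_sub_distrib]
  refine sum_congr rfl fun k hk => ?_
  obtain ⟨hk, hkK⟩ := mem_Icc.1 hk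
  have htoll : gainToll K k = logGain := funext fun g => if_pos hkK
  rw [htoll, rootedTreeSum_logGain (Nat.one_le_iff_ne_zero.1 hk)]
  ring

theorem two_rpow_hfun_mul_PK (K : ℕ) :
    (2 : ℝ) ^ hfun K * PK K = Real.exp (Real.log 2 + limitToll K (gainToll K)) := by
  have hPK : PK K = Real.exp (∑ k ∈ Icc 1 K, fK K k * rootedTreeSum (fun g => Real.log g) k) := by
    rw [PK, Real.exp_sum]
    exact prod_congr rfl fun k _ => prod_gval_rpow_eq_exp k (fK K k)
  rw [hPK, Real.rpow_def_of_pos two_pos, ← Real.exp_add, limitToll_gainToll]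
  ring_nf

end Constant

section Asymptotics

theorem exists_exp_add_two_mul_le (L : ℝ) {ε : ℝ} (hε : 0 < ε) :
    ∃ δ > 0, Real.exp (L + 2 * δ) ≤ Real.exp L + ε := by
  have hpos : 0 < Real.exp L + ε := add_pos (Real.exp_pos L) hε
  have hlt : L < Real.log (Real.exp L + ε) :=
    (Real.lt_log_iff_exp_lt hpos).2 (lt_add_of_pos_right _ hε)
  refine ⟨(Real.log (Real.exp L + ε) - L) / 2, half_pos (sub_pos.2 hlt), ?_⟩
  rw [mul_div_cancel₀ _ two_ne_zero, add_sub_cancel, Real.exp_log hpos]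

theorem eventually_natCast_le_exp_mul {δ : ℝ} (hδ : 0 < δ) :
    ∀ᶠ n : ℕ in atTop, (n : ℝ) ≤ Real.exp (δ * n) := by
  have hle := ((isLittleO_pow_exp_pos_mul_atTop 1 hδ).comp_tendsto
    tendsto_natCast_atTop_atTop).bound one_pos
  filter_upwards [hle] with n hn
  simpa using hn

theorem additiveFunctional_gt_of_subtreeCount_gt {n K : ℕ} {r : Fin n} {p : Fin n → Fin n}
    (h : IsRootedForest {r} p) {δ B : ℝ} (hn : (n : ℝ) ≤ Real.exp (δ * n))
    (hB : Real.exp (Real.log 2 + limitToll K (gainToll K) + 2 * δ) ≤ B)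
    (hcount : B ^ n < subtreeCount (parentGraph p)) :
    (limitToll K (gainToll K) + δ) * n < additiveFunctional (gainToll K) p := by
  by_contra! hle
  refine hcount.not_ge ?_
  calc (subtreeCount (parentGraph p) : ℝ)
      ≤ n * Real.exp (n * Real.log 2 + additiveFunctional (gainToll K) p) :=
        h.subtreeCount_parentGraph_le_exp K
    _ ≤ Real.exp (δ * n) * Real.exp (n * Real.log 2 + (limitToll K (gainToll K) + δ) * n) := by
        gcongr
    _ = Real.exp (Real.log 2 + limitToll K (gainToll K) + 2 * δ) ^ n := by
        rw [← Real.exp_add, ← Real.exp_nat_mul]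
        ring_nf
    _ ≤ B ^ n := by gcongr

end Asymptotics

/-- For every fixed `K ≥ 1` and every `ε > 0`, a.a.s. `c(𝒯_n) ≤ (2^{h(K)} P_K + ε)^n`. -/
theorem aas_subtree_upper_bound_hK_PK (K : ℕ) (hK : 1 ≤ K) :
    ∀ ε : ℝ, 0 < ε →
      Tendsto (fun n : ℕ =>
        treeProb n (fun G =>
          (subtreeCount G : ℝ) ≤ ((2 : ℝ) ^ (hfun K) * PK K + ε) ^ n))
        atTop (𝓝 1) := by
  intro ε hε
  rw [two_rpow_hfun_mul_PK]
  obtain ⟨δ, hδ, hδε⟩ :=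
    exists_exp_add_two_mul_le (Real.log 2 + limitToll K (gainToll K)) hε
  have hfail : Tendsto (fun n : ℕ => 1 - treeProb (n + 1) fun G => (subtreeCount G : ℝ) ≤
      (Real.exp (Real.log 2 + limitToll K (gainToll K)) + ε) ^ (n + 1)) atTop (𝓝 0) := by
    simp only [one_sub_treeProb (0 : Fin (_ + 1)), not_le]
    refine squeeze_zero' (.of_forall fun n => by positivity) ?_
      ((isToll_gainToll K).tendsto_card_filter_lt_div_card hδ)
    filter_upwards [(tendsto_add_atTop_nat 1).eventually (eventually_natCast_le_exp_mul hδ)]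
      with n hn
    refine div_le_div_of_nonneg_right (Nat.cast_le.2 (card_le_card fun p hp => ?_))
      (Nat.cast_nonneg _)
    simp only [mem_filter, mem_rootedForests] at hp ⊢
    exact ⟨hp.1, additiveFunctional_gt_of_subtreeCount_gt hp.1 hn hδε hp.2⟩
  rw [← tendsto_add_atTop_iff_nat 1]
  simpa only [sub_sub_cancel, sub_zero] using hfail.const_sub 1
end

section
/- Fix k ≥ 1 and a pair (T,v) with T a labelled tree on {1,…,k} and v ∈ {1,…,k}. Let X be the number of vertices of 𝒯_n of type (T,v). Then for every ε > 0, the probability that (1−ε)·n·e^{−k}/k! ≤ X ≤ (1+ε)·n·e^{−k}/k! tends to 1 as n → ∞. -/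
/-!
The proof is by the second moment method. In a tree on `n > 2k` vertices, distinct pendant sets of
size `k` are disjoint, so the vertices of type `(T, v)` correspond to the pendant copies of
`(T, v)`.

The trees with prescribed disjoint pendant copies of a rooted tree are counted by cutting the copies
off: with `m` copies and `r` remaining vertices, such a tree consists of a tree on the `r` vertices
and `m` attachment points in it, so there are `r ^ m * treeCount r` of them.

For copies of the one-vertex tree, this counts the trees in which the vertices of a prescribed set
are leaves, and inclusion–exclusion over the leaves yields Cayley's formula. For one and for two
copies of `(T, v)`, it gives the first two moments of the number `X` of pendant copies. By Cayley's
formula, `E X / n` tends to `c = e ^ (-k) / k!` and `E X ^ 2 / n ^ 2` to `c ^ 2`, hence the mean of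
`(X / n - c) ^ 2` tends to `0`, and Chebyshev's inequality concludes.
-/

open Filter Topology

/-- A vertex `u` of `G` is of type `(T, v)` if there is a `k`-element set `S ∋ u` such that
exactly one edge of `G` joins `S` to its complement, that edge is incident to `u`, and the
unique order-preserving bijection `Fin k ≃ S` maps the edge set of `T` onto the edge set of
the subgraph of `G` induced by `S`, and maps `v` to `u`. -/
def IsOfType {n k : ℕ} (G : SimpleGraph (Fin n)) (T : SimpleGraph (Fin k)) (v : Fin k)
    (u : Fin n) : Prop :=
  ∃ (S : Finset (Fin n)) (h : S.card = k),
    u ∈ S ∧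
    ((S.orderIsoOfFin h v : Fin n) = u) ∧
    (∀ i j : Fin k, T.Adj i j ↔ G.Adj (S.orderIsoOfFin h i) (S.orderIsoOfFin h j)) ∧
    (∀ a b : Fin n, a ∈ S → b ∉ S → G.Adj a b → a = u) ∧
    (∃! b : Fin n, b ∉ S ∧ G.Adj u b)

section Attach

variable {R ι K : Type*}

/-- The graph obtained from `A` by hanging a copy of the rooted graph `(T, v)` on the vertex `f i`
for every `i : ι`. The `i`-th copy lives on `{i} × K`, and its root `(i, v)` is joined to `f i`. -/
def attachCopies (T : SimpleGraph K) (v : K) (A : SimpleGraph R) (f : ι → R) :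
    SimpleGraph (R ⊕ ι × K) where
  Adj
    | .inl a, .inl b => A.Adj a b
    | .inl a, .inr (i, x) => x = v ∧ f i = a
    | .inr (i, x), .inl a => x = v ∧ f i = a
    | .inr (i, x), .inr (j, y) => i = j ∧ T.Adj x y
  symm := ⟨by
    rintro (a | ⟨i, x⟩) (b | ⟨j, y⟩) h
    exacts [h.symm, h, h, ⟨h.1.symm, h.2.symm⟩]⟩
  loopless := ⟨by
    rintro (a | ⟨i, x⟩) h
    exacts [A.irrefl h, T.irrefl h.2]⟩

variable {T : SimpleGraph K} {v : K} {A : SimpleGraph R} {f : ι → R}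

@[simp]
lemma attachCopies_adj_inl_inl {a b : R} :
    (attachCopies T v A f).Adj (.inl a) (.inl b) ↔ A.Adj a b := .rfl

@[simp]
lemma attachCopies_adj_inl_inr {a : R} {i : ι} {x : K} :
    (attachCopies T v A f).Adj (.inl a) (.inr (i, x)) ↔ x = v ∧ f i = a := .rfl

@[simp]
lemma attachCopies_adj_inr_inl {a : R} {i : ι} {x : K} :
    (attachCopies T v A f).Adj (.inr (i, x)) (.inl a) ↔ x = v ∧ f i = a := .rfl

@[simp]
lemma attachCopies_adj_inr_inr {i j : ι} {x y : K} :
    (attachCopies T v A f).Adj (.inr (i, x)) (.inr (j, y)) ↔ i = j ∧ T.Adj x y := .rfl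

lemma attachCopies_inj {A' : SimpleGraph R} {f' : ι → R} :
    attachCopies T v A f = attachCopies T v A' f' ↔ A = A' ∧ f = f' := by
  refine ⟨fun h => ⟨?_, ?_⟩, by rintro ⟨rfl, rfl⟩; rfl⟩
  · ext a b
    rw [← attachCopies_adj_inl_inl (T := T) (v := v) (f := f), h, attachCopies_adj_inl_inl]
  · funext i
    have hroot : (attachCopies T v A f).Adj (.inr (i, v)) (.inl (f i)) := ⟨rfl, rfl⟩
    rw [h] at hroot
    exact hroot.2.symm

lemma reachable_map_of_adj {V W : Type*} {G : SimpleGraph V} {H : SimpleGraph W} {φ : V → W}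
    (hφ : ∀ x y, G.Adj x y → H.Reachable (φ x) (φ y)) {x y : V} (hxy : G.Reachable x y) :
    H.Reachable (φ x) (φ y) := by
  rw [SimpleGraph.reachable_iff_reflTransGen] at hxy ⊢
  exact hxy.lift' φ fun a b hab => (SimpleGraph.reachable_iff_reflTransGen _ _).1 (hφ a b hab)

lemma reachable_attachCopies_inl {a b : R} :
    (attachCopies T v A f).Reachable (.inl a) (.inl b) ↔ A.Reachable a b := by
  refine ⟨fun h => reachable_map_of_adj (φ := Sum.elim id fun p => f p.1) ?_ h,
    fun h => reachable_map_of_adj (G := A) (φ := Sum.inl) ?_ h⟩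
  swap
  · exact fun _ _ hab => (attachCopies_adj_inl_inl.2 hab).reachable
  rintro (a | ⟨i, x⟩) (b | ⟨j, y⟩) hab
  · exact (attachCopies_adj_inl_inl.1 hab).reachable
  · obtain ⟨-, rfl⟩ := hab
    exact .rfl
  · obtain ⟨-, rfl⟩ := hab
    exact .rfl
  · obtain ⟨rfl, -⟩ := hab
    exact .rfl

lemma reachable_attachCopies_inr_inl (hT : T.Connected) (i : ι) (x : K) :
    (attachCopies T v A f).Reachable (.inr (i, x)) (.inl (f i)) := by
  have hcopy : (attachCopies T v A f).Reachable (.inr (i, x)) (.inr (i, v)) :=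
    reachable_map_of_adj (φ := fun y => Sum.inr (i, y))
      (fun _ _ hab => (attachCopies_adj_inr_inr.2 ⟨rfl, hab⟩).reachable) (hT.preconnected x v)
  exact hcopy.trans (attachCopies_adj_inr_inl.2 ⟨rfl, rfl⟩).reachable

lemma connected_attachCopies_iff (hT : T.Connected) :
    (attachCopies T v A f).Connected ↔ A.Connected := by
  simp only [SimpleGraph.connected_iff]
  constructor
  · rintro ⟨hpre, ⟨a | p⟩⟩
    · exact ⟨fun _ _ => reachable_attachCopies_inl.1 (hpre _ _), ⟨a⟩⟩
    · exact ⟨fun _ _ => reachable_attachCopies_inl.1 (hpre _ _), ⟨f p.1⟩⟩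
  · rintro ⟨hpre, ⟨a⟩⟩
    have hbase : ∀ x, (attachCopies T v A f).Reachable x (.inl a) := by
      rintro (b | ⟨i, x⟩)
      · exact reachable_attachCopies_inl.2 (hpre b a)
      · exact (reachable_attachCopies_inr_inl hT i x).trans
          (reachable_attachCopies_inl.2 (hpre (f i) a))
    exact ⟨fun x y => (hbase x).trans (hbase y).symm, ⟨.inl a⟩⟩

open scoped Classical in
-- Unlike the set of edges, a double sum over vertices splits along sums and products of types.
lemma two_mul_card_edgeSet {V : Type*} [Fintype V] (G : SimpleGraph V) :
    2 * Nat.card G.edgeSet = ∑ x, ∑ y, if G.Adj x y then 1 else 0 := by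
  simp only [Nat.card_eq_fintype_card, ← SimpleGraph.edgeFinset_card,
    ← G.sum_degrees_eq_twice_card_edges, ← SimpleGraph.card_neighborFinset_eq_degree,
    SimpleGraph.neighborFinset_eq_filter, Finset.card_filter]

lemma card_edgeSet_attachCopies [Finite R] [Finite ι] [Finite K] :
    Nat.card (attachCopies T v A f).edgeSet =
      Nat.card A.edgeSet + Nat.card ι * (Nat.card T.edgeSet + 1) := by
  classical
  have := Fintype.ofFinite R
  have := Fintype.ofFinite ι
  have := Fintype.ofFinite K
  have hlink : ∑ a : R, ∑ i : ι, ∑ x : K, (if x = v ∧ f i = a then 1 else 0) = Nat.card ι := by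
    rw [Finset.sum_comm]
    simp [ite_and]
  have hlink' : ∑ i : ι, ∑ x : K, ∑ a : R, (if x = v ∧ f i = a then 1 else 0) = Nat.card ι := by
    simp [ite_and]
  have hcopies : ∑ i : ι, ∑ x : K, ∑ j : ι, ∑ y : K, (if i = j ∧ T.Adj x y then 1 else 0) =
      Nat.card ι * (2 * Nat.card T.edgeSet) := by
    rw [two_mul_card_edgeSet T, Nat.card_eq_fintype_card, ← smul_eq_mul, ← Finset.card_univ,
      ← Finset.sum_const]
    refine Finset.sum_congr rfl fun i _ => Finset.sum_congr rfl fun x _ => ?_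
    rw [Finset.sum_comm]
    simp [ite_and]
  have htwo := two_mul_card_edgeSet (attachCopies T v A f)
  simp only [Fintype.sum_sum_type, Fintype.sum_prod_type, attachCopies_adj_inl_inl,
    attachCopies_adj_inl_inr, attachCopies_adj_inr_inl, attachCopies_adj_inr_inr,
    Finset.sum_add_distrib, hlink, hlink', hcopies, ← two_mul_card_edgeSet A] at htwo
  linarith

lemma isTree_attachCopies_iff [Finite R] [Finite ι] [Finite K] (hT : T.IsTree) :
    (attachCopies T v A f).IsTree ↔ A.IsTree := by
  have hcardT := (SimpleGraph.isTree_iff_connected_and_card.1 hT).2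
  rw [SimpleGraph.isTree_iff_connected_and_card, SimpleGraph.isTree_iff_connected_and_card,
    connected_attachCopies_iff hT.connected, card_edgeSet_attachCopies, hcardT, Nat.card_sum,
    Nat.card_prod, add_right_comm, Nat.add_right_cancel_iff]

end Attach

section Pendant

variable {V W K ι : Type*}

/-- The set `S` of vertices of `G` is pendant at its element `r`: exactly one edge of `G` joins `S`
to its complement, and that edge is incident to `r`. -/
def IsPendant (G : SimpleGraph V) (S : Set V) (r : V) : Prop :=
  r ∈ S ∧ ∃ b ∉ S, ∀ x ∈ S, ∀ y ∉ S, G.Adj x y ↔ x = r ∧ y = b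

/-- The image of `g` carries a pendant copy of the rooted graph `(T, v)`: `G` induces `T` along `g`,
and the image is pendant at `g v`. Injectivity of `g` is not part of the definition. -/
structure IsPendantCopy (G : SimpleGraph V) (T : SimpleGraph K) (v : K) (g : K → V) : Prop where
  comap_eq : G.comap g = T
  isPendant : IsPendant G (Set.range g) (g v)

variable {G : SimpleGraph V} {T : SimpleGraph K} {v : K} {S S' : Set V} {r r' : V}

lemma isPendant_iff : IsPendant G S r ↔
    r ∈ S ∧ (∀ a b, a ∈ S → b ∉ S → G.Adj a b → a = r) ∧ ∃! b, b ∉ S ∧ G.Adj r b := by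
  refine and_congr_right fun hr => ⟨?_, ?_⟩
  · rintro ⟨b, hb, hS⟩
    exact ⟨fun x y hx hy hxy => ((hS x hx y hy).1 hxy).1, b, ⟨hb, (hS r hr b hb).2 ⟨rfl, rfl⟩⟩,
      fun y hy => ((hS r hr y hy.1).1 hy.2).2⟩
  · rintro ⟨hroot, b, ⟨hb, hrb⟩, huniq⟩
    refine ⟨b, hb, fun x hx y hy => ⟨fun hxy => ?_, ?_⟩⟩
    · obtain rfl := hroot x y hx hy hxy
      exact ⟨rfl, huniq y ⟨hy, hxy⟩⟩
    · rintro ⟨rfl, rfl⟩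
      exact hrb

lemma isPendantCopy_comap_equiv {H : SimpleGraph W} (e : V ≃ W) {g : K → V} :
    IsPendantCopy (H.comap e) T v g ↔ IsPendantCopy H T v (e ∘ g) := by
  have hset : IsPendant (H.comap e) (Set.range g) (g v) ↔
      IsPendant H (Set.range (e ∘ g)) (e (g v)) := by
    simp [IsPendant, Set.range_comp, e.surjective.forall, e.surjective.exists]
  exact ⟨fun h => ⟨h.1, hset.1 h.2⟩, fun h => ⟨h.1, hset.2 h.2⟩⟩

lemma isPendantCopy_singleton_iff {l : V} :
    IsPendantCopy G (⊥ : SimpleGraph Unit) () (fun _ => l) ↔ ∃! b, G.Adj l b := by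
  have hne : ∀ b, (b ≠ l ∧ G.Adj l b) ↔ G.Adj l b := fun b => and_iff_right_of_imp fun h => h.ne'
  have hpendant : IsPendant G {l} l ↔ ∃! b, G.Adj l b := by
    simp only [isPendant_iff, Set.mem_singleton_iff, hne, true_and, and_iff_right_iff_imp]
    exact fun _ a _ ha _ _ => ha
  rw [← hpendant]
  exact ⟨fun h => by simpa using h.isPendant, fun h => ⟨Subsingleton.elim _ _, by simpa using h⟩⟩

lemma exists_adj_mem_notMem (hG : G.Connected) (hS : S.Nonempty) (hSc : Sᶜ.Nonempty) :
    ∃ x ∈ S, ∃ y ∉ S, G.Adj x y := by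
  obtain ⟨a, ha⟩ := hS
  obtain ⟨b, hb⟩ := hSc
  obtain ⟨p⟩ := hG.preconnected a b
  obtain ⟨d, -, hfst, hsnd⟩ := p.exists_boundary_dart S ha hb
  exact ⟨d.fst, hfst, d.snd, hsnd, d.adj⟩

lemma IsPendant.not_adj_of_disjoint (hG : G.Connected) (h : IsPendant G S r)
    (h' : IsPendant G S' r') (hdisj : Disjoint S S') (hunion : S ∪ S' ≠ Set.univ) {x y : V}
    (hx : x ∈ S) (hy : y ∈ S') : ¬ G.Adj x y := by
  -- An edge between `S` and `S'` would be the only exit of both, so no edge would leave `S ∪ S'`.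
  intro hxy
  obtain ⟨p, hp, q, hq, hpq⟩ :=
    exists_adj_mem_notMem hG ⟨x, Set.mem_union_left S' hx⟩ (Set.nonempty_compl.2 hunion)
  obtain ⟨-, b, hb, hexit⟩ := h
  obtain ⟨-, b', hb', hexit'⟩ := h'
  rw [Set.disjoint_left] at hdisj
  grind [G.adj_comm]

lemma IsPendant.disjoint (hG : G.Connected) (h : IsPendant G S r) (h' : IsPendant G S' r')
    (hSS' : ¬ S ⊆ S') (hS'S : ¬ S' ⊆ S) (hunion : S ∪ S' ≠ Set.univ) : Disjoint S S' := by
  -- Each of the four atoms of `S` and `S'` contains an endpoint of one of the two exits. If these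
  -- endpoints lie in four different atoms, one of the exits would have to be both exits at once.
  by_contra hmeet
  rw [Set.not_disjoint_iff_nonempty_inter] at hmeet
  rw [← Set.sdiff_nonempty] at hSS' hS'S
  rw [← Set.nonempty_compl] at hunion
  have hinter := exists_adj_mem_notMem hG hmeet (hSS'.mono (by grind))
  have hleft := exists_adj_mem_notMem hG hSS' (hmeet.mono (by grind))
  have hright := exists_adj_mem_notMem hG hS'S (hmeet.mono (by grind))
  have hout := exists_adj_mem_notMem hG hunion (hmeet.mono (by grind))
  obtain ⟨-, b, hb, hexit⟩ := h
  obtain ⟨-, b', hb', hexit'⟩ := h'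
  clear hmeet hSS' hS'S hunion
  grind [G.adj_comm]

lemma union_range_ne_univ [Finite K] (hV : 2 * Nat.card K < Nat.card V) (g g' : K → V) :
    Set.range g ∪ Set.range g' ≠ Set.univ := by
  intro h
  have hcard := Set.ncard_union_le (Set.range g) (Set.range g')
  rw [h, Set.ncard_univ] at hcard
  have hg : (Set.range g).ncard ≤ Nat.card K := Finite.card_range_le g
  have hg' : (Set.range g').ncard ≤ Nat.card K := Finite.card_range_le g'
  omega

variable {R : Type*} {A : SimpleGraph R} {f : ι → R}

lemma isPendantCopy_attachCopies (i : ι) :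
    IsPendantCopy (attachCopies T v A f) T v (fun x => .inr (i, x)) := by
  refine ⟨by ext x y; simp, ⟨v, rfl⟩, .inl (f i), by simp, ?_⟩
  rintro _ ⟨x, rfl⟩ (a | ⟨j, y⟩) hy
  · simp [eq_comm]
  · have hij : i ≠ j := by
      rintro rfl
      exact hy ⟨y, rfl⟩
    simp [hij]

lemma exists_eq_attachCopies [Finite K] {G : SimpleGraph (R ⊕ ι × K)} (hG : G.Connected)
    (hV : 2 * Nat.card K < Nat.card (R ⊕ ι × K))
    (hP : ∀ i, IsPendantCopy G T v (fun x => .inr (i, x))) :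
    ∃ f : ι → R, G = attachCopies T v (G.comap Sum.inl) f := by
  have hna : ∀ {i j x y}, i ≠ j → ¬ G.Adj (.inr (i, x)) (.inr (j, y)) := fun {i j x y} hij =>
    (hP i).isPendant.not_adj_of_disjoint hG (hP j).isPendant
      (by simp [Set.disjoint_range_iff, hij]) (union_range_ne_univ hV _ _) ⟨x, rfl⟩ ⟨y, rfl⟩
  have hf : ∀ i, ∃ a : R, ∀ x b, G.Adj (.inr (i, x)) (.inl b) ↔ x = v ∧ a = b := by
    intro i
    obtain ⟨-, a | ⟨j, y⟩, hnot, hexit⟩ := (hP i).isPendant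
    · exact ⟨a, fun x b => by simpa [eq_comm] using hexit (.inr (i, x)) ⟨x, rfl⟩ (.inl b) (by simp)⟩
    · have hij : i ≠ j := by
        rintro rfl
        exact hnot ⟨y, rfl⟩
      exact absurd ((hexit _ ⟨v, rfl⟩ _ hnot).2 ⟨rfl, rfl⟩) (hna hij)
  choose f hf using hf
  refine ⟨f, ?_⟩
  ext (a | ⟨i, x⟩) (b | ⟨j, y⟩)
  · exact .rfl
  · rw [G.adj_comm, hf, attachCopies_adj_inl_inr]
  · rw [hf, attachCopies_adj_inr_inl]
  · rw [attachCopies_adj_inr_inr]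
    by_cases hij : i = j
    · subst hij
      simp [← (hP i).comap_eq]
    · simp [hij, hna hij]

end Pendant

section Counting

/-- The type of trees with vertex set `V`. -/
abbrev LabelledTree (V : Type*) := {G : SimpleGraph V // G.IsTree}

noncomputable instance {V : Type*} [Finite V] : Fintype (LabelledTree V) := Fintype.ofFinite _

/-- The number of labelled trees on `n` vertices. -/
noncomputable def treeCount (n : ℕ) : ℕ := Nat.card (LabelledTree (Fin n))

variable {V W R K ι : Type*} {T : SimpleGraph K}

lemma isTree_comap_equiv_iff (e : V ≃ W) {H : SimpleGraph W} : (H.comap e).IsTree ↔ H.IsTree :=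
  (SimpleGraph.Iso.comap e H).isTree_iff

/-- Pulling trees back along a bijection of the vertex sets. -/
def LabelledTree.congr (e : V ≃ W) : LabelledTree W ≃ LabelledTree V :=
  e.symm.simpleGraph.subtypeEquiv fun _ => (isTree_comap_equiv_iff e).symm

lemma card_labelledTree [Finite V] : Nat.card (LabelledTree V) = treeCount (Nat.card V) :=
  Nat.card_congr (LabelledTree.congr (Finite.equivFin V).symm)

lemma card_tree_isPendantCopy_inr [Finite R] [Finite ι] [Finite K] (hT : T.IsTree) (v : K)
    (hV : 2 * Nat.card K < Nat.card (R ⊕ ι × K)) :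
    Nat.card {G : LabelledTree (R ⊕ ι × K) //
        ∀ i, IsPendantCopy G.1 T v (fun x => .inr (i, x))} =
      Nat.card R ^ Nat.card ι * treeCount (Nat.card R) := by
  rw [← card_labelledTree, ← Nat.card_fun, ← Nat.card_prod]
  refine (Nat.card_congr (Equiv.ofBijective (fun q => ⟨⟨attachCopies T v q.2.1 q.1,
    (isTree_attachCopies_iff hT).2 q.2.2⟩, isPendantCopy_attachCopies⟩) ⟨?_, ?_⟩)).symm
  · rintro ⟨f, A, hA⟩ ⟨f', A', hA'⟩ h
    obtain ⟨rfl, rfl⟩ := attachCopies_inj.1 (congrArg (fun G => G.1.1) h)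
    rfl
  · rintro ⟨⟨G, hG⟩, hP⟩
    obtain ⟨f, hf⟩ := exists_eq_attachCopies hG.connected hV hP
    have hbase : (G.comap Sum.inl).IsTree := by
      rwa [hf, isTree_attachCopies_iff hT] at hG
    exact ⟨(f, ⟨_, hbase⟩), Subtype.ext (Subtype.ext hf.symm)⟩

theorem card_tree_isPendantCopy [Finite V] [Finite ι] [Finite K] (hT : T.IsTree) (v : K)
    (φ : ι × K ↪ V) (hV : 2 * Nat.card K < Nat.card V) :
    Nat.card {G : LabelledTree V // ∀ i, IsPendantCopy G.1 T v (fun x => φ (i, x))} =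
      (Nat.card V - Nat.card ι * Nat.card K) ^ Nat.card ι *
        treeCount (Nat.card V - Nat.card ι * Nat.card K) := by
  classical
  let e : ↥(Set.range φ)ᶜ ⊕ ι × K ≃ V :=
    ((Equiv.refl _).sumCongr (Equiv.ofInjective φ φ.injective)).trans
      ((Equiv.sumComm _ _).trans (Equiv.Set.sumCompl (Set.range φ)))
  have hcard : Nat.card ↥(Set.range φ)ᶜ = Nat.card V - Nat.card ι * Nat.card K := by
    rw [← Nat.card_congr e, Nat.card_sum, Nat.card_prod, Nat.add_sub_cancel]
  rw [← hcard, ← card_tree_isPendantCopy_inr hT v (by rwa [Nat.card_congr e])]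
  refine Nat.card_congr ((LabelledTree.congr e).subtypeEquiv fun G => ?_)
  exact forall_congr' fun i =>
    (isPendantCopy_comap_equiv (H := G.1) e (g := fun x => .inr (i, x))).symm

end Counting

section Cayley

lemma card_tree_leaves {n : ℕ} (hn : 3 ≤ n) (s : Finset (Fin n)) :
    Nat.card {G : LabelledTree (Fin n) // ∀ l ∈ s, ∃! b, G.1.Adj l b} =
      (n - s.card) ^ s.card * treeCount (n - s.card) := by
  let φ : s × Unit ↪ Fin n := ⟨fun p => p.1, fun _ _ h => Prod.ext (Subtype.ext h) rfl⟩
  have h := card_tree_isPendantCopy (T := (⊥ : SimpleGraph Unit)) .of_subsingleton () φ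
    (by simpa using by omega)
  have hleaf (G : LabelledTree (Fin n)) (l : s) :
      IsPendantCopy G.1 ⊥ () (fun x => φ (l, x)) ↔ ∃! b, G.1.Adj l b :=
    isPendantCopy_singleton_iff (l := l.1)
  simpa [hleaf] using h

lemma alternating_sum_treeCount {n : ℕ} (hn : 3 ≤ n) :
    ∑ j ∈ Finset.range (n + 1),
      ((-1) ^ (n - j) * n.choose j : ℤ) * (j ^ (n - j) * treeCount j : ℕ) = 0 := by
  classical
  let treesWithLeaf (l : Fin n) : Finset (LabelledTree (Fin n)) := {G | ∃! b, G.1.Adj l b}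
  have hcard (s : Finset (Fin n)) : (s.inf treesWithLeaf).card =
      (n - s.card) ^ s.card * treeCount (n - s.card) := by
    rw [← card_tree_leaves hn, Nat.card_eq_fintype_card, Fintype.card_subtype]
    congr 1
    ext G
    simp [treesWithLeaf, Finset.mem_inf]
  have hempty : (Finset.univ : Finset (Fin n)).inf (fun l => (treesWithLeaf l)ᶜ) = ∅ := by
    have : Nontrivial (Fin n) := Fin.nontrivial_iff_two_le.2 (by omega)
    refine Finset.eq_empty_of_forall_notMem fun G hG => ?_
    obtain ⟨l, hl⟩ := G.2.exists_vert_degree_one_of_nontrivial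
    have hleaf : G ∈ treesWithLeaf l := by
      simpa [treesWithLeaf] using SimpleGraph.degree_eq_one_iff_existsUnique_adj.1 hl
    exact Finset.mem_compl.1 (Finset.mem_inf.1 hG l (Finset.mem_univ l)) hleaf
  have hsieve := Finset.inclusion_exclusion_card_inf_compl Finset.univ treesWithLeaf
  simp only [hempty, hcard] at hsieve
  rw [Finset.sum_powerset_apply_card fun m =>
      (-1 : ℤ) ^ m * ((n - m) ^ m * treeCount (n - m) : ℕ), Finset.card_univ, Fintype.card_fin,
    ← Finset.sum_range_reflect, Finset.card_empty, Nat.cast_zero] at hsieve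
  rw [hsieve]
  refine Finset.sum_congr rfl fun j hj => ?_
  have hjn : j ≤ n := Finset.mem_range_succ_iff.1 hj
  rw [Nat.add_sub_cancel, Nat.choose_symm hjn, Nat.sub_sub_self hjn, nsmul_eq_mul]
  ring

lemma alternating_sum_pow {n d : ℕ} (hd : d < n) :
    ∑ j ∈ Finset.range (n + 1), ((-1) ^ (n - j) * n.choose j : ℤ) * (j ^ d : ℕ) = 0 := by
  simpa [fwdDiff_iter_eq_sum_shift] using congrFun (fwdDiff_iter_pow_eq_zero_of_lt (R := ℤ) hd) 0

lemma treeCount_one : treeCount 1 = 1 := by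
  have : Unique (LabelledTree (Fin 1)) :=
    ⟨⟨⟨⊥, .of_subsingleton⟩⟩, fun G => Subtype.ext (Subsingleton.elim _ _)⟩
  exact Nat.card_unique

lemma treeCount_two : treeCount 2 = 1 := by
  have htop : (⊤ : SimpleGraph (Fin 2)).IsTree :=
    ⟨SimpleGraph.connected_top, .of_card_le_two (by simp)⟩
  have : Unique (LabelledTree (Fin 2)) := by
    refine ⟨⟨⟨⊤, htop⟩⟩, fun G => Subtype.ext ?_⟩
    refine eq_top_iff.2 fun x y hxy => ?_
    obtain ⟨z, hxz⟩ := G.2.connected.preconnected.exists_adj_of_nontrivial x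
    obtain rfl : z = y := by have := hxz.ne; have : x ≠ y := hxy; omega
    exact hxz
  exact Nat.card_unique

theorem treeCount_eq {n : ℕ} (hn : n ≠ 0) : treeCount n = n ^ (n - 2) := by
  -- The numbers `j ^ (j - 2)` satisfy the same recursion, because the `n`-th finite difference of a
  -- polynomial of degree `n - 2` vanishes.
  induction n using Nat.strong_induction_on with
  | _ n ih =>
  obtain rfl | rfl | hn3 : n = 1 ∨ n = 2 ∨ 3 ≤ n := by omega
  · exact treeCount_one
  · exact treeCount_two
  have hterm : ∀ j < n, j ^ (n - j) * treeCount j = j ^ (n - 2) := by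
    intro j hj
    obtain rfl | rfl | hj2 : j = 0 ∨ j = 1 ∨ 2 ≤ j := by omega
    · rw [zero_pow (by omega), zero_pow (by omega), zero_mul]
    · rw [treeCount_one, one_pow, one_pow, one_mul]
    · rw [ih j hj (by omega), ← pow_add]
      congr 1
      omega
  have hsum := (alternating_sum_treeCount hn3).trans
    (alternating_sum_pow (show n - 2 < n by omega)).symm
  rw [Finset.sum_range_succ, Finset.sum_range_succ,
    Finset.sum_congr rfl fun j hj => by rw [hterm j (Finset.mem_range.1 hj)]] at hsum
  exact_mod_cast (by simpa using hsum : (treeCount n : ℤ) = n ^ (n - 2))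

end Cayley

section Moments

variable {n k : ℕ} {G : SimpleGraph (Fin n)} {T : SimpleGraph (Fin k)} {v : Fin k}

lemma exists_orderEmbOfFin_eq (g : Fin k ↪o Fin n) :
    ∃ (S : Finset (Fin n)) (h : S.card = k), S.orderEmbOfFin h = g := by
  have hcard : (Finset.univ.map g.toEmbedding).card = k := by simp
  exact ⟨_, hcard, (Finset.orderEmbOfFin_unique' hcard fun i => by simp).symm⟩

lemma isOfType_iff {u : Fin n} :
    IsOfType G T v u ↔ ∃ g : Fin k ↪o Fin n, IsPendantCopy G T v g ∧ g v = u := by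
  have hcopy (S : Finset (Fin n)) (h : S.card = k) :
      IsPendantCopy G T v (S.orderEmbOfFin h) ↔
        (∀ i j, T.Adj i j ↔ G.Adj (S.orderEmbOfFin h i) (S.orderEmbOfFin h j)) ∧
          IsPendant G S (S.orderEmbOfFin h v) := by
    rw [← Finset.range_orderEmbOfFin S h]
    refine ⟨fun hP => ⟨fun i j => ?_, hP.2⟩, fun hP => ⟨?_, hP.2⟩⟩
    · rw [← hP.comap_eq, SimpleGraph.comap_adj]
    · ext i j
      exact (hP.1 i j).symm
  constructor
  · rintro ⟨S, h, hu, rfl, hadj, hroot, huniq⟩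
    exact ⟨S.orderEmbOfFin h, (hcopy S h).2 ⟨hadj, isPendant_iff.2 ⟨hu, hroot, huniq⟩⟩, rfl⟩
  · rintro ⟨g, hP, rfl⟩
    obtain ⟨S, h, rfl⟩ := exists_orderEmbOfFin_eq g
    obtain ⟨hadj, hpendant⟩ := (hcopy S h).1 hP
    obtain ⟨hu, hroot, huniq⟩ := isPendant_iff.1 hpendant
    exact ⟨S, h, hu, rfl, hadj, hroot, huniq⟩

lemma IsPendantCopy.disjoint_range (hG : G.Connected) (hn : 2 * k < n) {g g' : Fin k ↪o Fin n}
    (h : IsPendantCopy G T v g) (h' : IsPendantCopy G T v g') (hne : g ≠ g') :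
    Disjoint (Set.range g) (Set.range g') := by
  have hnot {a b : Fin k ↪o Fin n} (hab : a ≠ b) : ¬ Set.range a ⊆ Set.range b := fun hsub => by
    refine hab (OrderEmbedding.range_inj.1 (Set.eq_of_subset_of_ncard_le hsub ?_))
    rw [Set.ncard_range_of_injective b.injective, Set.ncard_range_of_injective a.injective]
  exact h.isPendant.disjoint hG h'.isPendant (hnot hne) (hnot hne.symm)
    (union_range_ne_univ (by simpa using hn) g g')

/-- The number of pendant copies of `(T, v)` in `G`. A copy is recorded by the increasing
enumeration of its vertices. -/
noncomputable def pendantCount (G : SimpleGraph (Fin n)) (T : SimpleGraph (Fin k)) (v : Fin k) :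
    ℕ :=
  Nat.card {g : Fin k ↪o Fin n // IsPendantCopy G T v g}

lemma card_isOfType (hG : G.Connected) (hn : 2 * k < n) :
    Nat.card {u : Fin n // IsOfType G T v u} = pendantCount G T v := by
  refine (Nat.card_congr (Equiv.ofBijective
    (fun g => ⟨g.1 v, isOfType_iff.2 ⟨g.1, g.2, rfl⟩⟩) ⟨?_, ?_⟩)).symm
  · rintro ⟨g, hg⟩ ⟨g', hg'⟩ hv
    by_contra hne
    exact (hg.disjoint_range hG hn hg' fun h => hne (Subtype.ext h)).ne_of_mem
      ⟨v, rfl⟩ ⟨v, rfl⟩ (congrArg Subtype.val hv)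
  · rintro ⟨u, hu⟩
    obtain ⟨g, hg, rfl⟩ := isOfType_iff.1 hu
    exact ⟨⟨g, hg⟩, rfl⟩

lemma card_orderEmb (α : Type*) [LinearOrder α] (k : ℕ) :
    Nat.card (Fin k ↪o α) = (Nat.card α).choose k := by
  rw [Nat.card_congr Set.powersetCard.ofFinEmbEquiv, Set.powersetCard.card]

lemma card_orderEmb_mem {α : Type*} [LinearOrder α] (s : Set α) (k : ℕ) :
    Nat.card {g : Fin k ↪o α // ∀ i, g i ∈ s} = (Nat.card s).choose k := by
  rw [← card_orderEmb]
  exact Nat.card_congr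
    { toFun := fun g => OrderEmbedding.ofMapLEIff (fun i => ⟨g.1 i, g.2 i⟩) fun _ _ => g.1.le_iff_le
      invFun := fun g => ⟨g.trans (OrderEmbedding.subtype s), fun i => (g i).2⟩
      left_inv := fun _ => rfl
      right_inv := fun _ => rfl }

/-- Ordered pairs of disjoint `k`-element subsets of `Fin n`, recorded by their increasing
enumerations. -/
abbrev DisjointPair (k n : ℕ) :=
  {p : (Fin k ↪o Fin n) × (Fin k ↪o Fin n) // Disjoint (Set.range p.1) (Set.range p.2)}

lemma card_disjointPair (k n : ℕ) :
    Nat.card (DisjointPair k n) = n.choose k * (n - k).choose k := by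
  rw [Nat.card_congr (Equiv.subtypeProdEquivSigmaSubtype fun g g' : Fin k ↪o Fin n =>
    Disjoint (Set.range g) (Set.range g')), Nat.card_sigma]
  have hcard (g : Fin k ↪o Fin n) :
      Nat.card {g' : Fin k ↪o Fin n // Disjoint (Set.range g) (Set.range g')} =
        (n - k).choose k := by
    have hcompl : Nat.card ↥(Set.range g)ᶜ = n - k := by
      rw [Nat.card_coe_set_eq, Set.ncard_compl, Set.ncard_range_of_injective g.injective]
      simp
    rw [← hcompl, ← card_orderEmb_mem]
    simp only [disjoint_comm (a := Set.range g), ← Set.subset_compl_iff_disjoint_right,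
      Set.range_subset_iff]
  simp only [hcard, Finset.sum_const, Finset.card_univ, ← Nat.card_eq_fintype_card, card_orderEmb,
    Nat.card_fin, smul_eq_mul]

lemma sq_pendantCount (hG : G.Connected) (hn : 2 * k < n) :
    pendantCount G T v ^ 2 = pendantCount G T v +
      Nat.card {p : DisjointPair k n // IsPendantCopy G T v p.1.1 ∧ IsPendantCopy G T v p.1.2} := by
  classical
  let s : Finset (Fin k ↪o Fin n) := {g | IsPendantCopy G T v g}
  have hs : pendantCount G T v = s.card := by
    rw [pendantCount, Nat.card_eq_fintype_card, Fintype.card_subtype]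
  have hoffDiag : Nat.card {p : DisjointPair k n //
      IsPendantCopy G T v p.1.1 ∧ IsPendantCopy G T v p.1.2} = s.offDiag.card := by
    rw [Nat.card_congr (Equiv.subtypeSubtypeEquivSubtypeInter _ fun p :
      (Fin k ↪o Fin n) × (Fin k ↪o Fin n) => IsPendantCopy G T v p.1 ∧ IsPendantCopy G T v p.2),
      Nat.card_eq_fintype_card, Fintype.card_subtype]
    congr 1
    ext ⟨g, g'⟩
    simp only [Finset.mem_filter_univ, Finset.mem_offDiag, s]
    constructor
    · rintro ⟨hdisj, hg, hg'⟩
      exact ⟨hg, hg', fun h => hdisj.ne_of_mem ⟨v, rfl⟩ ⟨v, rfl⟩ (congrArg (· v) h)⟩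
    · rintro ⟨hg, hg', hne⟩
      exact ⟨hg.disjoint_range hG hn hg' hne, hg, hg'⟩
  rw [hs, hoffDiag, sq, ← Finset.card_product, ← Finset.diag_union_offDiag,
    Finset.card_union_of_disjoint s.disjoint_diag_offDiag, Finset.diag_card]

lemma sum_card_subtype_eq {α β : Type*} [Fintype α] [Finite β] {r : α → β → Prop} {c : ℕ}
    (h : ∀ b, Nat.card {a // r a b} = c) : ∑ a, Nat.card {b // r a b} = Nat.card β * c := by
  classical
  have := Fintype.ofFinite β
  simp only [Nat.card_eq_fintype_card, Fintype.card_subtype, Finset.card_filter] at h ⊢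
  rw [Finset.sum_comm]
  simp only [h, Finset.sum_const, Finset.card_univ, smul_eq_mul]

lemma sum_pendantCount (hT : T.IsTree) (v : Fin k) (hn : 2 * k < n) :
    ∑ G : LabelledTree (Fin n), pendantCount G.1 T v =
      n.choose k * ((n - k) * treeCount (n - k)) := by
  have hcard (g : Fin k ↪o Fin n) :
      Nat.card {G : LabelledTree (Fin n) // IsPendantCopy G.1 T v g} =
        (n - k) * treeCount (n - k) := by
    simpa using card_tree_isPendantCopy hT v
      ((Equiv.punitProd.{0} (Fin k)).toEmbedding.trans g.toEmbedding) (by simpa using hn)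
  have h := sum_card_subtype_eq hcard
  rwa [card_orderEmb, Nat.card_fin] at h

lemma sum_card_disjointPair (hT : T.IsTree) (v : Fin k) (hn : 2 * k < n) :
    ∑ G : LabelledTree (Fin n), Nat.card {p : DisjointPair k n //
        IsPendantCopy G.1 T v p.1.1 ∧ IsPendantCopy G.1 T v p.1.2} =
      n.choose k * (n - k).choose k * ((n - 2 * k) ^ 2 * treeCount (n - 2 * k)) := by
  have hcard (p : DisjointPair k n) :
      Nat.card {G : LabelledTree (Fin n) //
        IsPendantCopy G.1 T v p.1.1 ∧ IsPendantCopy G.1 T v p.1.2} =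
        (n - 2 * k) ^ 2 * treeCount (n - 2 * k) := by
    obtain ⟨⟨g, g'⟩, hdisj⟩ := p
    have hinj : Function.Injective (Sum.elim g g') :=
      g.injective.sumElim g'.injective fun i j => hdisj.ne_of_mem ⟨i, rfl⟩ ⟨j, rfl⟩
    have h := card_tree_isPendantCopy hT v
      ((Equiv.boolProdEquivSum (Fin k)).toEmbedding.trans ⟨_, hinj⟩) (by simpa using hn)
    simpa [Bool.forall_bool] using h
  rw [← card_disjointPair]
  exact sum_card_subtype_eq hcard

end Moments

open scoped BigOperators

section SecondMoment

lemma one_sub_expect_sq_div_le {Ω : Type*} [Fintype Ω] [Nonempty Ω] (X : Ω → ℝ) (c : ℝ) {δ : ℝ}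
    (hδ : 0 < δ) :
    1 - (𝔼 ω, (X ω - c) ^ 2) / δ ^ 2 ≤
      (Nat.card {ω // |X ω - c| ≤ δ} : ℝ) / Nat.card Ω := by
  classical
  have hpointwise (ω : Ω) : 1 - (X ω - c) ^ 2 / δ ^ 2 ≤ if |X ω - c| ≤ δ then 1 else 0 := by
    split_ifs with h
    · exact sub_le_self 1 (by positivity)
    · rw [sub_nonpos, one_le_div (by positivity), ← sq_abs (X ω - c)]
      gcongr
      exact (not_le.1 h).le
  calc 1 - (𝔼 ω, (X ω - c) ^ 2) / δ ^ 2
      = 𝔼 ω, (1 - (X ω - c) ^ 2 / δ ^ 2) := by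
        rw [Finset.expect_sub_distrib, Fintype.expect_const, Finset.expect_div]
    _ ≤ 𝔼 ω, if |X ω - c| ≤ δ then (1 : ℝ) else 0 :=
        Finset.expect_le_expect fun ω _ => hpointwise ω
    _ = (Nat.card {ω // |X ω - c| ≤ δ} : ℝ) / Nat.card Ω := by
        rw [Fintype.expect_eq_sum_div_card, Finset.sum_boole, Nat.card_eq_fintype_card,
          Nat.card_eq_fintype_card, Fintype.card_subtype]

theorem tendsto_card_abs_sub_le_div_card {α : Type*} {l : Filter α} {Ω : α → Type*}
    [∀ a, Fintype (Ω a)] {X : ∀ a, Ω a → ℝ} {c δ : ℝ} (hδ : 0 < δ)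
    (hΩ : ∀ᶠ a in l, Nonempty (Ω a)) (h₁ : Tendsto (fun a => 𝔼 ω, X a ω) l (𝓝 c))
    (h₂ : Tendsto (fun a => 𝔼 ω, X a ω ^ 2) l (𝓝 (c ^ 2))) :
    Tendsto (fun a => (Nat.card {ω // |X a ω - c| ≤ δ} : ℝ) / Nat.card (Ω a)) l (𝓝 1) := by
  have hdev : Tendsto (fun a => 𝔼 ω, (X a ω - c) ^ 2) l (𝓝 0) := by
    have h := (h₂.sub (h₁.const_mul (2 * c))).add_const (c ^ 2)
    rw [show c ^ 2 - 2 * c * c + c ^ 2 = 0 by ring] at h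
    refine h.congr' (hΩ.mono fun a _ => ?_)
    rw [Finset.mul_expect, ← Finset.expect_sub_distrib,
      ← Fintype.expect_const (ι := Ω a) (c ^ 2), ← Finset.expect_add_distrib]
    exact Finset.expect_congr rfl fun ω _ => by ring
  have hlower := (hdev.div_const (δ ^ 2)).const_sub 1
  rw [zero_div, sub_zero] at hlower
  refine tendsto_of_tendsto_of_tendsto_of_le_of_le' hlower tendsto_const_nhds ?_ ?_
  · exact hΩ.mono fun a _ => one_sub_expect_sq_div_le (X a) c hδ
  · refine .of_forall fun a => div_le_one_of_le₀ ?_ (Nat.cast_nonneg _)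
    exact Nat.cast_le.2 (Finite.card_subtype_le _)

end SecondMoment

section Asymptotics

lemma tendsto_sub_div (d : ℕ) : Tendsto (fun n : ℕ => ((n - d : ℕ) : ℝ) / n) atTop (𝓝 1) := by
  have h : Tendsto (fun n : ℕ => 1 - (d : ℝ) / n) atTop (𝓝 (1 - 0)) :=
    tendsto_const_nhds.sub (tendsto_const_div_atTop_nhds_zero_nat _)
  rw [sub_zero] at h
  refine h.congr' ?_
  filter_upwards [eventually_gt_atTop d] with n hn
  have hn0 : (n : ℝ) ≠ 0 := Nat.cast_ne_zero.2 (by omega)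
  rw [Nat.cast_sub hn.le, sub_div, div_self hn0]

lemma tendsto_sub_div_pow (d : ℕ) :
    Tendsto (fun n : ℕ => (((n - d : ℕ) : ℝ) / n) ^ n) atTop (𝓝 (Real.exp (-d))) := by
  refine (Real.tendsto_one_add_div_pow_exp (-d)).congr' ?_
  filter_upwards [eventually_gt_atTop d] with n hn
  have hn0 : (n : ℝ) ≠ 0 := Nat.cast_ne_zero.2 (by omega)
  rw [Nat.cast_sub hn.le, sub_div, div_self hn0, neg_div, ← sub_eq_add_neg]

lemma tendsto_choose_div_pow (k : ℕ) :
    Tendsto (fun n : ℕ => (n.choose k : ℝ) / (n : ℝ) ^ k) atTop (𝓝 (1 / k.factorial)) := by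
  have h := (isEquivalent_choose k).div
    (Asymptotics.IsEquivalent.refl (u := fun n : ℕ => (n : ℝ) ^ k))
  refine (h.congr_right ?_).tendsto_const
  filter_upwards [eventually_ne_atTop 0] with n hn
  have hn0 : (n : ℝ) ≠ 0 := Nat.cast_ne_zero.2 hn
  rw [Pi.div_apply, div_right_comm, div_self (pow_ne_zero k hn0), Function.const_apply]

lemma tendsto_choose_sub_div_pow (d k : ℕ) :
    Tendsto (fun n : ℕ => ((n - d).choose k : ℝ) / (n : ℝ) ^ k) atTop (𝓝 (1 / k.factorial)) := by
  have h := ((tendsto_choose_div_pow k).comp (tendsto_sub_atTop_nat d)).mul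
    ((tendsto_sub_div d).pow k)
  rw [one_pow, mul_one] at h
  refine h.congr' ?_
  filter_upwards [eventually_gt_atTop d] with n hn
  have hd : ((n - d : ℕ) : ℝ) ≠ 0 := Nat.cast_ne_zero.2 (by omega)
  simp only [Function.comp_apply]
  rw [div_pow, div_mul_div_cancel₀ (pow_ne_zero k hd)]

lemma tendsto_pow_mul_treeCount_sub_div (d : ℕ) :
    Tendsto (fun n : ℕ => (n : ℝ) ^ d * treeCount (n - d) / treeCount n) atTop
      (𝓝 (Real.exp (-d))) := by
  have h := (tendsto_sub_div_pow d).div ((tendsto_sub_div d).pow (d + 2)) (by simp)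
  rw [one_pow, div_one] at h
  refine h.congr' ?_
  filter_upwards [eventually_ge_atTop (d + 2)] with n hn
  obtain ⟨m, rfl⟩ := Nat.exists_eq_add_of_le hn
  have hsub : d + 2 + m - d = m + 2 := by omega
  have hsub' : d + 2 + m - 2 = d + m := by omega
  have hm : ((m + 2 : ℕ) : ℝ) ≠ 0 := by positivity
  have hn0 : ((d + 2 + m : ℕ) : ℝ) ≠ 0 := by positivity
  simp only [Pi.div_apply, hsub]
  rw [treeCount_eq (by omega), treeCount_eq (by omega), hsub', Nat.add_sub_cancel, Nat.cast_pow,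
    Nat.cast_pow]
  simp only [pow_add, div_pow]
  field_simp

lemma tendsto_expect_pendantCount_div {k : ℕ} {T : SimpleGraph (Fin k)} (hT : T.IsTree)
    (v : Fin k) :
    Tendsto (fun n : ℕ => 𝔼 G : LabelledTree (Fin n), (pendantCount G.1 T v : ℝ) / n) atTop
      (𝓝 (Real.exp (-k) / k.factorial)) := by
  have h := ((tendsto_choose_div_pow k).mul (tendsto_sub_div k)).mul
    (tendsto_pow_mul_treeCount_sub_div k)
  rw [mul_one, one_div_mul_eq_div] at h
  refine h.congr' ?_
  filter_upwards [eventually_gt_atTop (2 * k)] with n hn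
  have hn0 : (n : ℝ) ≠ 0 := Nat.cast_ne_zero.2 (by omega)
  rw [Fintype.expect_eq_sum_div_card, ← Finset.sum_div, ← Nat.cast_sum, sum_pendantCount hT v hn,
    ← Nat.card_eq_fintype_card, ← treeCount]
  push_cast
  field_simp

lemma tendsto_expect_card_disjointPair_div {k : ℕ} {T : SimpleGraph (Fin k)} (hT : T.IsTree)
    (v : Fin k) :
    Tendsto (fun n : ℕ => 𝔼 G : LabelledTree (Fin n), (Nat.card {p : DisjointPair k n //
        IsPendantCopy G.1 T v p.1.1 ∧ IsPendantCopy G.1 T v p.1.2} : ℝ) / n ^ 2) atTop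
      (𝓝 ((Real.exp (-k) / k.factorial) ^ 2)) := by
  have h := (((tendsto_choose_div_pow k).mul (tendsto_choose_sub_div_pow k k)).mul
    ((tendsto_sub_div (2 * k)).pow 2)).mul (tendsto_pow_mul_treeCount_sub_div (2 * k))
  have hlim : 1 / (k.factorial : ℝ) * (1 / k.factorial) * 1 ^ 2 * Real.exp (-(2 * k : ℕ)) =
      (Real.exp (-k) / k.factorial) ^ 2 := by
    rw [div_pow, ← Real.exp_nat_mul]
    push_cast
    ring_nf
  rw [hlim] at h
  refine h.congr' ?_
  filter_upwards [eventually_gt_atTop (2 * k)] with n hn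
  have hn0 : (n : ℝ) ≠ 0 := Nat.cast_ne_zero.2 (by omega)
  rw [Fintype.expect_eq_sum_div_card, ← Finset.sum_div, ← Nat.cast_sum,
    sum_card_disjointPair hT v hn, ← Nat.card_eq_fintype_card, ← treeCount]
  push_cast
  field_simp
  ring

lemma tendsto_expect_sq_pendantCount_div {k : ℕ} {T : SimpleGraph (Fin k)} (hT : T.IsTree)
    (v : Fin k) :
    Tendsto (fun n : ℕ => 𝔼 G : LabelledTree (Fin n), ((pendantCount G.1 T v : ℝ) / n) ^ 2)
      atTop (𝓝 ((Real.exp (-k) / k.factorial) ^ 2)) := by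
  have h := ((tendsto_expect_pendantCount_div hT v).div_atTop
    tendsto_natCast_atTop_atTop).add (tendsto_expect_card_disjointPair_div hT v)
  rw [zero_add] at h
  refine h.congr' ?_
  filter_upwards [eventually_gt_atTop (2 * k)] with n hn
  rw [Finset.expect_div, ← Finset.expect_add_distrib]
  refine Finset.expect_congr rfl fun G _ => ?_
  rw [div_pow, ← Nat.cast_pow (pendantCount G.1 T v), sq_pendantCount G.2.connected hn,
    Nat.cast_add, add_div, div_div, ← sq]

end Asymptotics

lemma treeProb_eq (n : ℕ) (p : SimpleGraph (Fin n) → Prop) :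
    treeProb n p = (Nat.card {G : LabelledTree (Fin n) // p G.1} : ℝ) /
      Nat.card (LabelledTree (Fin n)) := by
  rw [treeProb, Nat.card_congr (Equiv.subtypeSubtypeEquivSubtypeInter SimpleGraph.IsTree p)]

lemma nonempty_labelledTree {n : ℕ} (hn : n ≠ 0) : Nonempty (LabelledTree (Fin n)) := by
  refine (Nat.card_pos_iff.1 ?_).1
  rw [← treeCount, treeCount_eq hn]
  exact pow_pos (Nat.pos_of_ne_zero hn) _

lemma abs_div_sub_le_iff {x y a b ε : ℝ} (hy : 0 < y) :
    |x / y - a / b| ≤ ε * (a / b) ↔ (1 - ε) * y * a / b ≤ x ∧ x ≤ (1 + ε) * y * a / b := by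
  have hlower : (1 - ε) * y * a / b = (a / b - ε * (a / b)) * y := by ring
  have hupper : (1 + ε) * y * a / b = (a / b + ε * (a / b)) * y := by ring
  rw [hlower, hupper, ← le_div_iff₀ hy, ← div_le_iff₀ hy, abs_sub_le_iff, sub_le_iff_le_add',
    sub_le_comm, and_comm]

/-- For a fixed tree `T` on `{1,…,k}` rooted at `v`, and every `ε > 0`, a.a.s. the number `X`
of vertices of `𝒯_n` of type `(T,v)` satisfies `(1-ε) n e^{-k}/k! ≤ X ≤ (1+ε) n e^{-k}/k!`. -/
theorem aas_type_count (k : ℕ) (hk : 1 ≤ k) (T : SimpleGraph (Fin k)) (hT : T.IsTree)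
    (v : Fin k) :
    ∀ ε : ℝ, 0 < ε →
      Tendsto (fun n : ℕ =>
        treeProb n (fun G =>
          (1 - ε) * n * Real.exp (-(k : ℝ)) / (Nat.factorial k) ≤
              (Nat.card {u : Fin n // IsOfType G T v u} : ℝ) ∧
          (Nat.card {u : Fin n // IsOfType G T v u} : ℝ) ≤
              (1 + ε) * n * Real.exp (-(k : ℝ)) / (Nat.factorial k)))
        atTop (𝓝 1) := by
  intro ε hε
  have hδ : 0 < ε * (Real.exp (-k) / k.factorial) := by positivity
  refine (tendsto_card_abs_sub_le_div_card hδ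
    ((eventually_ne_atTop 0).mono fun _ => nonempty_labelledTree)
    (tendsto_expect_pendantCount_div hT v) (tendsto_expect_sq_pendantCount_div hT v)).congr' ?_
  filter_upwards [eventually_gt_atTop (2 * k)] with n hn
  have hn0 : (0 : ℝ) < n := Nat.cast_pos.2 (by omega)
  have htype (G : LabelledTree (Fin n)) := card_isOfType (T := T) (v := v) G.2.connected hn
  simp only [treeProb_eq, abs_div_sub_le_iff hn0, htype]
end
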